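/- Let α, β ≥ -1/2, let k₀ ≥ 1 be an integer and let 0 ≤ k ≤ k₀ be an integer; if α+β = -1 assume additionally k ≥ 1. Define S_k^{α,β}(θ,φ) = ∫₀^∞ ∂_t^{2k} H_t^{α,β}(θ,φ) · t^{2k₀-1} dt. There exists a constant C depending only on α, β, k, k₀ such that |∂_θ S_k^{α,β}(θ,φ)| + |∂_φ S_k^{α,β}(θ,φ)| ≤ C / ( |θ-φ| · μ_{α,β}^+(B(θ, |θ-φ|)) ) for all θ, φ ∈ (0,π) with θ ≠ φ. -/

import Mathlib

open MeasureTheory Real Set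

noncomputable section

/-- The Jacobi measure `μ_{α,β}^+` on `(0,π)`: density
`(sin(θ/2))^(2α+1) (cos(θ/2))^(2β+1)` w.r.t. Lebesgue measure on `(0,π)`. -/
def jacobiMeasure (α β : ℝ) : Measure ℝ :=
  (volume.restrict (Ioo 0 π)).withDensity
    (fun θ => ENNReal.ofReal (Real.sin (θ / 2) ^ (2 * α + 1) * Real.cos (θ / 2) ^ (2 * β + 1)))

/-- The ball `B(θ,r) = (θ-r, θ+r) ∩ (0,π)`. -/
def jacobiBall (θ r : ℝ) : Set ℝ := Ioo (θ - r) (θ + r) ∩ Ioo 0 π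

/-- The measure `Π_α` on `[-1,1]`. -/
def PiMeasure (α : ℝ) : Measure ℝ :=
  if α = -(1 / 2) then (2 : ENNReal)⁻¹ • (Measure.dirac (-1) + Measure.dirac 1)
  else
    (volume.restrict (Icc (-1) 1)).withDensity
      (fun u => ENNReal.ofReal
        (Real.Gamma (α + 1) / (Real.sqrt π * Real.Gamma (α + 1 / 2)) * (1 - u ^ 2) ^ (α - 1 / 2)))

/-- `q(θ,φ,u,v) = 1 - u sin(θ/2) sin(φ/2) - v cos(θ/2) cos(φ/2)`. -/
def qfun (θ φ u v : ℝ) : ℝ :=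
  1 - u * Real.sin (θ / 2) * Real.sin (φ / 2) - v * Real.cos (θ / 2) * Real.cos (φ / 2)

/-- `Ψ^{α,β}(t,s) = sinh(t/2) / (cosh(t/2) - 1 + s)^(α+β+2)`. -/
def Psi (α β t s : ℝ) : ℝ :=
  Real.sinh (t / 2) / (Real.cosh (t / 2) - 1 + s) ^ (α + β + 2)

/-- The Jacobi-Poisson kernel `H_t^{α,β}(θ,φ)`. -/
def Hker (α β t θ φ : ℝ) : ℝ :=
  ((2 : ℝ) ^ (-(α + β + 2)) / (jacobiMeasure α β (Ioo 0 π)).toReal) * Real.sinh (t / 2) *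
    ∫ u, ∫ v, 1 / (Real.cosh (t / 2) - 1 + qfun θ φ u v) ^ (α + β + 2)
      ∂(PiMeasure β) ∂(PiMeasure α)

/-- The symmetrized kernel `H̃_t^{α,β}(θ,φ) = (1/4) sin θ sin φ H_t^{α+1,β+1}(θ,φ)`. -/
def Htilde (α β t θ φ : ℝ) : ℝ :=
  (1 / 4) * Real.sin θ * Real.sin φ * Hker (α + 1) (β + 1) t θ φ

end

/-!
The kernel `H_t(θ, φ)` is the `Π_α ⊗ Π_β`-average of `Ψ(t, q(θ, φ, u, v))`. Put
`D = cosh (t / 2) - 1 + s`. Each `t`-derivative of `Ψ(t, s)` costs half a power of `1 / D` as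
`D → 0` and nothing as `D → ∞`, while the `s`-derivative costs a full power of `1 / D`. Half of the
latter is recovered at `s = q` from `|∂_θ q| ≤ √q`, a consequence of `(2 ∂_θ q)² + (1 - q)² ≤ 1`.
Since `t² + s ≲ D`, with an arbitrary polynomial factor to spare for large `t`, this gives
`|∂_θ ∂_t^{2k} Ψ(t, q)| t^{2k₀-1} ≲ t (t² + q)^{-(α+β+2)-1}`, whose integral over `t > 0` is a
multiple of `q^{-(α+β+2)}`.

It remains to average `q^{-(α+β+2)}` over `u` and `v`. Each of the two integrals is dominated by an
explicit primitive, and the average is at most a constant times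
`q(1,1)⁻¹ q(0,1)^{-(α+1/2)} q(1,0)^{-(β+1/2)}`, where only `u, v` are displayed. Here
`|θ - φ|² ≲ q(1,1)`, and `sin²(x/2) ≲ q(0,1)`, `cos²(x/2) ≲ q(1,0)` for `x` in the ball
`B(θ, |θ - φ|)`, so this quantity is at most a constant times the reciprocal of
`|θ - φ| μ(B(θ, |θ - φ|))`.

The derivatives are estimated through difference quotients, which requires no differentiation under
the integral over `t`.
-/

open Filter Topology
open scoped ENNReal ContDiff

/-! ### Symbols -/

/-- The denominator of `Psi`. It measures both the singularity of `Psi` at `t = s = 0` and its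
size as `t → ∞`. -/
noncomputable def psiDenom (t s : ℝ) : ℝ := cosh (t / 2) - 1 + s

/-- The building blocks of the partial derivatives of `Psi`; `Psi α β` itself is
`psiMonomial 1 0 (α + β + 2)`. -/
noncomputable def psiMonomial (a b : ℕ) (τ t s : ℝ) : ℝ :=
  sinh (t / 2) ^ a * cosh (t / 2) ^ b / psiDenom t s ^ τ

/-- The symbol class of functions which, on the half plane `s > 0`, are linear combinations of
monomials of order at most `D ^ (-p)` as `D := psiDenom t s → 0` and `D ^ e` as `D → ∞`. The two
orders are read off from `sinh (t / 2) ^ 2 ≲ D * (1 + D)` and `cosh (t / 2) ≤ 1 + D`. -/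
inductive IsPsiSymbol (p e : ℝ) : (ℝ → ℝ → ℝ) → Prop
  | monomial (a b : ℕ) (τ : ℝ) (hp : τ - a / 2 ≤ p) (he : a + b - τ ≤ e) :
      IsPsiSymbol p e (psiMonomial a b τ)
  | zero : IsPsiSymbol p e 0
  | add {F G : ℝ → ℝ → ℝ} (hF : IsPsiSymbol p e F) (hG : IsPsiSymbol p e G) :
      IsPsiSymbol p e (F + G)
  | const_smul (c : ℝ) {F : ℝ → ℝ → ℝ} (hF : IsPsiSymbol p e F) : IsPsiSymbol p e (c • F)
  | congr {F G : ℝ → ℝ → ℝ} (hF : IsPsiSymbol p e F) (h : ∀ t s, 0 < s → F t s = G t s) :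
      IsPsiSymbol p e G

section Symbols

variable {a b : ℕ} {p e τ t s : ℝ} {F : ℝ → ℝ → ℝ}

lemma le_psiDenom (t s : ℝ) : s ≤ psiDenom t s := by
  unfold psiDenom; linarith [one_le_cosh (t / 2)]

lemma psiDenom_pos (hs : 0 < s) : 0 < psiDenom t s := hs.trans_le (le_psiDenom t s)

@[fun_prop]
lemma continuous_psiDenom : Continuous fun z : ℝ × ℝ => psiDenom z.1 z.2 := by
  unfold psiDenom; fun_prop

lemma hasDerivAt_sinh_half (t : ℝ) :
    HasDerivAt (fun t : ℝ => sinh (t / 2)) (cosh (t / 2) / 2) t := by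
  simpa [div_eq_mul_inv] using ((hasDerivAt_id t).div_const 2).sinh

lemma hasDerivAt_cosh_half (t : ℝ) :
    HasDerivAt (fun t : ℝ => cosh (t / 2)) (sinh (t / 2) / 2) t := by
  simpa [div_eq_mul_inv] using ((hasDerivAt_id t).div_const 2).cosh

lemma hasDerivAt_psiMonomial_left (hs : 0 < s) :
    HasDerivAt (fun t => psiMonomial a b τ t s)
      (a / 2 * psiMonomial (a - 1) (b + 1) τ t s + b / 2 * psiMonomial (a + 1) (b - 1) τ t s
        - τ / 2 * psiMonomial (a + 1) b (τ + 1) t s) t := by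
  have hD := psiDenom_pos (t := t) hs
  have hnum := ((hasDerivAt_sinh_half t).pow a).mul ((hasDerivAt_cosh_half t).pow b)
  have hden : HasDerivAt (fun t => psiDenom t s ^ τ)
      (sinh (t / 2) / 2 * τ * psiDenom t s ^ (τ - 1)) t :=
    (((hasDerivAt_cosh_half t).sub_const 1).add_const s).rpow_const (Or.inl hD.ne')
  refine (hnum.div hden (rpow_pos_of_pos hD τ).ne').congr_deriv ?_
  simp only [psiMonomial, Pi.mul_apply, Pi.pow_apply, rpow_add_one hD.ne', rpow_sub_one hD.ne']
  field_simp
  ring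

lemma hasDerivAt_psiMonomial_right (hs : 0 < s) :
    HasDerivAt (fun s => psiMonomial a b τ t s) (-τ * psiMonomial a b (τ + 1) t s) s := by
  have hD := psiDenom_pos (t := t) hs
  have hden : HasDerivAt (fun s => psiDenom t s ^ τ) (1 * τ * psiDenom t s ^ (τ - 1)) s :=
    ((hasDerivAt_id s).const_add (cosh (t / 2) - 1)).rpow_const (Or.inl hD.ne')
  refine ((hasDerivAt_const s (sinh (t / 2) ^ a * cosh (t / 2) ^ b)).div hden
    (rpow_pos_of_pos hD τ).ne').congr_deriv ?_
  simp only [psiMonomial, rpow_add_one hD.ne', rpow_sub_one hD.ne']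
  field_simp
  ring

namespace IsPsiSymbol

lemma const_smul_of_ne_zero {c : ℝ} (h : c ≠ 0 → IsPsiSymbol p e F) : IsPsiSymbol p e (c • F) := by
  rcases eq_or_ne c 0 with rfl | hc
  · simpa using zero
  · exact const_smul c (h hc)

lemma exists_hasDerivAt_left (hF : IsPsiSymbol p e F) :
    ∃ F', IsPsiSymbol (p + 1 / 2) e F' ∧
      ∀ t s, 0 < s → HasDerivAt (fun t => F t s) (F' t s) t := by
  induction hF with
  | monomial a b τ hp he =>
    refine ⟨((a : ℝ) / 2) • psiMonomial (a - 1) (b + 1) τ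
        + ((b : ℝ) / 2) • psiMonomial (a + 1) (b - 1) τ
        + (-(τ / 2)) • psiMonomial (a + 1) b (τ + 1),
      ((const_smul_of_ne_zero fun ha => monomial _ _ _ ?_ ?_).add
        (const_smul_of_ne_zero fun hb => monomial _ _ _ ?_ ?_)).add
        (const_smul _ <| monomial _ _ _ ?_ ?_),
      fun t s hs => (hasDerivAt_psiMonomial_left hs).congr_deriv ?_⟩
    · rw [Nat.cast_pred (Nat.pos_of_ne_zero (by simpa using ha))]; linarith
    · rw [Nat.cast_pred (Nat.pos_of_ne_zero (by simpa using ha))]; push_cast; linarith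
    · push_cast; linarith
    · rw [Nat.cast_pred (Nat.pos_of_ne_zero (by simpa using hb))]; push_cast; linarith
    · push_cast; linarith
    · push_cast; linarith
    · simp only [Pi.add_apply, Pi.smul_apply, smul_eq_mul]; ring
  | zero => exact ⟨0, zero, fun t s _ => hasDerivAt_const t 0⟩
  | add _ _ ihF ihG =>
    obtain ⟨F', hF', hF⟩ := ihF
    obtain ⟨G', hG', hG⟩ := ihG
    exact ⟨F' + G', hF'.add hG', fun t s hs => (hF t s hs).add (hG t s hs)⟩
  | const_smul c _ ih =>
    obtain ⟨F', hF', hF⟩ := ih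
    exact ⟨c • F', hF'.const_smul c, fun t s hs => (hF t s hs).const_smul c⟩
  | congr _ h ih =>
    obtain ⟨F', hF', hF⟩ := ih
    exact ⟨F', hF', fun t s hs => (hF t s hs).congr_of_eventuallyEq <|
      .of_forall fun t => (h t s hs).symm⟩

lemma exists_hasDerivAt_right (hF : IsPsiSymbol p e F) :
    ∃ F', IsPsiSymbol (p + 1) (e - 1) F' ∧
      ∀ t s, 0 < s → HasDerivAt (F t) (F' t s) s := by
  induction hF with
  | monomial a b τ hp he =>
    exact ⟨(-τ) • psiMonomial a b (τ + 1),
      const_smul _ <| monomial _ _ _ (by linarith) (by linarith),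
      fun t s hs => hasDerivAt_psiMonomial_right hs⟩
  | zero => exact ⟨0, zero, fun _ s _ => hasDerivAt_const s 0⟩
  | add _ _ ihF ihG =>
    obtain ⟨F', hF', hF⟩ := ihF
    obtain ⟨G', hG', hG⟩ := ihG
    exact ⟨F' + G', hF'.add hG', fun t s hs => (hF t s hs).add (hG t s hs)⟩
  | const_smul c _ ih =>
    obtain ⟨F', hF', hF⟩ := ih
    exact ⟨c • F', hF'.const_smul c, fun t s hs => (hF t s hs).const_smul c⟩
  | congr _ h ih =>
    obtain ⟨F', hF', hF⟩ := ih
    exact ⟨F', hF', fun t s hs => (hF t s hs).congr_of_eventuallyEq <| by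
      filter_upwards [Ioi_mem_nhds hs] with s hs using (h t s hs).symm⟩

protected lemma deriv_left (hF : IsPsiSymbol p e F) :
    IsPsiSymbol (p + 1 / 2) e fun t s => deriv (fun t => F t s) t := by
  obtain ⟨F', hF', hd⟩ := hF.exists_hasDerivAt_left
  exact hF'.congr fun t s hs => (hd t s hs).deriv.symm

protected lemma deriv_right (hF : IsPsiSymbol p e F) :
    IsPsiSymbol (p + 1) (e - 1) fun t s => deriv (F t) s := by
  obtain ⟨F', hF', hd⟩ := hF.exists_hasDerivAt_right
  exact hF'.congr fun t s hs => (hd t s hs).deriv.symm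

lemma differentiableAt_right (hF : IsPsiSymbol p e F) (hs : 0 < s) :
    DifferentiableAt ℝ (F t) s := by
  obtain ⟨F', -, hd⟩ := hF.exists_hasDerivAt_right
  exact (hd t s hs).differentiableAt

protected lemma iteratedDeriv_left (hF : IsPsiSymbol p e F) (m : ℕ) :
    IsPsiSymbol (p + m / 2) e fun t s => iteratedDeriv m (fun t => F t s) t := by
  induction m with
  | zero => simpa using hF
  | succ m ih =>
    simp only [iteratedDeriv_succ]
    convert ih.deriv_left using 1
    push_cast; ring

protected lemma continuousOn (hF : IsPsiSymbol p e F) :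
    ContinuousOn (fun z : ℝ × ℝ => F z.1 z.2) (univ ×ˢ Ioi 0) := by
  induction hF with
  | monomial a b τ =>
    refine ContinuousOn.div (by fun_prop) (ContinuousOn.rpow_const (by fun_prop) fun z hz => ?_)
      fun z hz => ?_
    · exact Or.inl (psiDenom_pos hz.2).ne'
    · exact (rpow_pos_of_pos (psiDenom_pos hz.2) τ).ne'
  | zero => exact continuousOn_const
  | add _ _ ihF ihG => exact ihF.add ihG
  | const_smul c _ ih => exact ih.const_smul c
  | congr _ h ih => exact ih.congr fun z hz => (h z.1 z.2 hz.2).symm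

end IsPsiSymbol

lemma sq_sinh_half_le (hs : 0 < s) :
    sinh (t / 2) ^ 2 ≤ 2 * (psiDenom t s * (1 + psiDenom t s)) := by
  unfold psiDenom
  nlinarith [cosh_sq (t / 2), one_le_cosh (t / 2)]

lemma abs_sinh_half_pow_le (hs : 0 < s) (a : ℕ) :
    |sinh (t / 2)| ^ a ≤
      2 ^ (a / 2 : ℝ) * (psiDenom t s ^ (a / 2 : ℝ) * (1 + psiDenom t s) ^ (a / 2 : ℝ)) := by
  have hD := psiDenom_pos (t := t) hs
  calc |sinh (t / 2)| ^ a = (sinh (t / 2) ^ 2) ^ (a / 2 : ℝ) := by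
        rw [← sq_abs, ← rpow_natCast_mul (abs_nonneg _), ← rpow_natCast]
        congr 1; push_cast; ring
    _ ≤ (2 * (psiDenom t s * (1 + psiDenom t s))) ^ (a / 2 : ℝ) := by
        gcongr; exact sq_sinh_half_le hs
    _ = _ := by
        rw [mul_rpow (by norm_num) (by positivity), mul_rpow (by positivity) (by positivity)]

lemma cosh_half_pow_le (hs : 0 < s) (b : ℕ) :
    cosh (t / 2) ^ b ≤ (1 + psiDenom t s) ^ (b : ℝ) := by
  rw [rpow_natCast]
  gcongr
  unfold psiDenom; linarith

lemma abs_psiMonomial (hs : 0 < s) :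
    |psiMonomial a b τ t s| = |sinh (t / 2)| ^ a * cosh (t / 2) ^ b / psiDenom t s ^ τ := by
  rw [psiMonomial, abs_div, abs_mul, abs_pow, abs_pow, abs_of_pos (cosh_pos _),
    abs_of_pos (rpow_pos_of_pos (psiDenom_pos hs) τ)]

lemma abs_psiMonomial_le (hs : 0 < s) (hp : τ - a / 2 ≤ p) (he : a + b - τ ≤ e) :
    |psiMonomial a b τ t s| ≤
      2 ^ (a / 2 : ℝ) * (psiDenom t s ^ (-p) * (1 + psiDenom t s) ^ (p + e)) := by
  have hD := psiDenom_pos (t := t) hs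
  have hsinh := abs_sinh_half_pow_le (t := t) hs a
  have hcosh := cosh_half_pow_le (t := t) hs b
  rw [abs_psiMonomial hs]
  generalize psiDenom t s = D at *
  have h1D : 0 < 1 + D := by positivity
  calc |sinh (t / 2)| ^ a * cosh (t / 2) ^ b / D ^ τ
      ≤ 2 ^ (a / 2 : ℝ) * (D ^ (a / 2 : ℝ) * (1 + D) ^ (a / 2 : ℝ)) * (1 + D) ^ (b : ℝ)
          / D ^ τ := by
        gcongr
    _ = 2 ^ (a / 2 : ℝ) * (D ^ (-p) * (D ^ (a / 2 + p - τ) * (1 + D) ^ (a / 2 + b : ℝ))) := by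
        rw [rpow_sub hD, rpow_add hD, rpow_neg hD.le, rpow_add h1D]
        field_simp
    _ ≤ 2 ^ (a / 2 : ℝ) * (D ^ (-p) * ((1 + D) ^ (a / 2 + p - τ) * (1 + D) ^ (a / 2 + b : ℝ))) := by
        gcongr ?_ * (?_ * (?_ * ?_))
        exact rpow_le_rpow hD.le (by linarith) (by linarith)
    _ ≤ 2 ^ (a / 2 : ℝ) * (D ^ (-p) * (1 + D) ^ (p + e)) := by
        rw [← rpow_add h1D]
        gcongr ?_ * (?_ * ?_)
        exact rpow_le_rpow_of_exponent_le (by linarith) (by linarith)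

lemma IsPsiSymbol.exists_abs_le (hF : IsPsiSymbol p e F) :
    ∃ K, 0 ≤ K ∧ ∀ t s, 0 < s →
      |F t s| ≤ K * (psiDenom t s ^ (-p) * (1 + psiDenom t s) ^ (p + e)) := by
  induction hF with
  | monomial a b τ hp he =>
    exact ⟨2 ^ (a / 2 : ℝ), by positivity, fun t s hs => abs_psiMonomial_le hs hp he⟩
  | zero => exact ⟨0, le_rfl, by simp⟩
  | add _ _ ihF ihG =>
    obtain ⟨K, hK, hF⟩ := ihF
    obtain ⟨L, hL, hG⟩ := ihG
    refine ⟨K + L, by positivity, fun t s hs => ?_⟩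
    rw [add_mul]
    exact (abs_add_le _ _).trans (add_le_add (hF t s hs) (hG t s hs))
  | const_smul c _ ih =>
    obtain ⟨K, hK, hF⟩ := ih
    refine ⟨|c| * K, by positivity, fun t s hs => ?_⟩
    rw [Pi.smul_apply, Pi.smul_apply, smul_eq_mul, abs_mul, mul_assoc]
    gcongr
    exact hF t s hs
  | congr _ h ih =>
    obtain ⟨K, hK, hF⟩ := ih
    exact ⟨K, hK, fun t s hs => h t s hs ▸ hF t s hs⟩

end Symbols

/-! ### Parametric integrals -/

section ParametricIntegral

variable {X E : Type*} [NormedAddCommGroup E]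

lemma enorm_integral_sub_integral_le [NormedSpace ℝ E] [MeasurableSpace X]
    {μ : Measure X} {f g : X → E} (hf : AEStronglyMeasurable f μ)
    (hg : AEStronglyMeasurable g μ) :
    ‖∫ x, f x ∂μ - ∫ x, g x ∂μ‖ₑ ≤ ∫⁻ x, ‖f x - g x‖ₑ ∂μ := by
  by_cases h : Integrable (f - g) μ
  · by_cases hg' : Integrable g μ
    · have hf' : Integrable f μ := sub_add_cancel f g ▸ h.add hg'
      rw [← integral_sub hf' hg']
      exact enorm_integral_le_lintegral_enorm _
    · have hf' : ¬ Integrable f μ := fun hf' => hg' (sub_sub_cancel f g ▸ hf'.sub h)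
      simp [integral_undef hf', integral_undef hg']
  · have htop : ∫⁻ x, ‖f x - g x‖ₑ ∂μ = ⊤ := by
      by_contra hne
      exact h ⟨hf.sub hg, Ne.lt_top hne⟩
    simp [htop]

lemma enorm_deriv_le_of_eventually_enorm_sub_le [NormedSpace ℝ E] {f : ℝ → E} {x₀ : ℝ} {B : ℝ≥0∞}
    (h : ∀ᶠ x in 𝓝 x₀, ‖f x - f x₀‖ₑ ≤ B * ‖x - x₀‖ₑ) : ‖deriv f x₀‖ₑ ≤ B := by
  rcases eq_or_ne B ⊤ with rfl | hB
  · exact le_top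
  lift B to NNReal using hB
  rw [enorm_le_coe]
  refine norm_deriv_le_of_lip' B.coe_nonneg (h.mono fun x hx => ?_)
  simpa [enorm_eq_nnnorm, ← ENNReal.coe_mul, ← NNReal.coe_le_coe] using hx

variable [TopologicalSpace X] [T2Space X] [MeasurableSpace X] [OpensMeasurableSpace X]
  {ν : Measure X} [IsFiniteMeasure ν] {K : Set X}

lemma integrable_of_continuousOn_of_ae_mem_isCompact {f : X → E} (hf : ContinuousOn f K)
    (hK : IsCompact K) (hν : ∀ᵐ w ∂ν, w ∈ K) : Integrable f ν := by
  obtain ⟨C, hC⟩ := hK.exists_bound_of_continuousOn hf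
  refine .of_bound ?_ C (hν.mono hC)
  rw [← Measure.restrict_eq_self_of_ae_mem hν]
  exact hf.aestronglyMeasurable_of_isCompact hK hK.measurableSet

lemma integrable_of_continuousOn_univ_prod {F : ℝ → X → E}
    (hF : ContinuousOn (fun z : ℝ × X => F z.1 z.2) (univ ×ˢ K))
    (hK : IsCompact K) (hν : ∀ᵐ w ∂ν, w ∈ K) (t : ℝ) : Integrable (F t) ν :=
  integrable_of_continuousOn_of_ae_mem_isCompact
    (hF.comp (f := fun w => (t, w)) (by fun_prop) fun _ hw => ⟨mem_univ t, hw⟩) hK hν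

variable [NormedSpace ℝ E]

lemma continuous_integral_of_continuousOn {F : ℝ → X → E}
    (hF : ContinuousOn (fun z : ℝ × X => F z.1 z.2) (univ ×ˢ K))
    (hK : IsCompact K) (hν : ∀ᵐ w ∂ν, w ∈ K) : Continuous fun t => ∫ w, F t w ∂ν := by
  refine continuous_iff_continuousAt.2 fun t => ?_
  obtain ⟨C, hC⟩ := ((isCompact_closedBall t 1).prod hK).exists_bound_of_continuousOn
    (hF.mono (prod_mono_left (subset_univ _)))
  refine continuousAt_of_dominated (bound := fun _ => C)
    (.of_forall fun t => (integrable_of_continuousOn_univ_prod hF hK hν t).aestronglyMeasurable)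
    ?_ (integrable_const C) ?_
  · filter_upwards [Metric.closedBall_mem_nhds t one_pos] with r hr
    filter_upwards [hν] with w hw using hC (r, w) ⟨hr, hw⟩
  · filter_upwards [hν] with w hw
    exact (hF.comp_continuous (f := fun r : ℝ => (r, w)) (by fun_prop)
      fun r => ⟨mem_univ r, hw⟩).continuousAt

lemma hasDerivAt_integral_of_continuousOn {F F' : ℝ → X → E}
    (hF : ContinuousOn (fun z : ℝ × X => F z.1 z.2) (univ ×ˢ K))
    (hF' : ContinuousOn (fun z : ℝ × X => F' z.1 z.2) (univ ×ˢ K))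
    (hK : IsCompact K) (hν : ∀ᵐ w ∂ν, w ∈ K)
    (hd : ∀ w ∈ K, ∀ t, HasDerivAt (F · w) (F' t w) t) (t : ℝ) :
    HasDerivAt (fun t => ∫ w, F t w ∂ν) (∫ w, F' t w ∂ν) t := by
  have hint := integrable_of_continuousOn_univ_prod hF hK hν
  have hint' := integrable_of_continuousOn_univ_prod hF' hK hν
  obtain ⟨C, hC⟩ := ((isCompact_closedBall t 1).prod hK).exists_bound_of_continuousOn
    (hF'.mono (prod_mono_left (subset_univ _)))
  refine (hasDerivAt_integral_of_dominated_loc_of_deriv_le (bound := fun _ => C)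
    (Metric.closedBall_mem_nhds t one_pos) (.of_forall fun t => (hint t).aestronglyMeasurable)
    (hint t) (hint' t).aestronglyMeasurable ?_ (integrable_const C) ?_).2
  · filter_upwards [hν] with w hw r hr using hC (r, w) ⟨hr, hw⟩
  · filter_upwards [hν] with w hw r _ using hd w hw r

lemma iteratedDeriv_integral_of_continuousOn {F : ℝ → X → E}
    (hF : ∀ w ∈ K, ContDiff ℝ ∞ (F · w))
    (hcont : ∀ m, ContinuousOn (fun z : ℝ × X => iteratedDeriv m (F · z.2) z.1) (univ ×ˢ K))
    (hK : IsCompact K) (hν : ∀ᵐ w ∂ν, w ∈ K) (m : ℕ) :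
    iteratedDeriv m (fun t => ∫ w, F t w ∂ν) = fun t => ∫ w, iteratedDeriv m (F · w) t ∂ν := by
  induction m with
  | zero => simp
  | succ m ih =>
    rw [iteratedDeriv_succ, ih]
    funext t
    refine (hasDerivAt_integral_of_continuousOn (F := fun t w => iteratedDeriv m (F · w) t)
      (F' := fun t w => iteratedDeriv (m + 1) (F · w) t)
      (hcont m) (hcont (m + 1)) hK hν (fun w hw t => ?_) t).deriv
    rw [iteratedDeriv_succ]
    exact ((hF w hw).differentiable_iteratedDeriv m (by exact_mod_cast ENat.natCast_lt_top m) t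
      ).hasDerivAt

end ParametricIntegral

/-! ### The measures `Π_α` -/

section PiMeasure

variable {α β τ a A Q : ℝ}

lemma hasDerivAt_rpow_mul_affine_rpow {x : ℝ} (a : ℝ) (hx : 0 < x) (hQx : 0 < Q + A * x) :
    HasDerivAt (fun x => x ^ a * (Q + A * x) ^ (-a))
      (a * Q * (x ^ (a - 1) * (Q + A * x) ^ (-(a + 1)))) x := by
  have hlin : HasDerivAt (fun x => Q + A * x) A x := by
    simpa using ((hasDerivAt_id x).const_mul A).const_add Q
  refine ((hasDerivAt_rpow_const (p := a) (Or.inl hx.ne')).mul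
    (hlin.rpow_const (p := -a) (Or.inl hQx.ne'))).congr_deriv ?_
  rw [rpow_sub_one hx.ne', rpow_sub_one hQx.ne', show -(a + 1) = -a - 1 by ring,
    rpow_sub_one hQx.ne']
  generalize hy : Q + A * x = y at hQx ⊢
  obtain rfl : Q = y - A * x := by linarith
  field_simp
  ring

lemma lintegral_rpow_mul_affine_rpow (ha : 0 < a) (hQ : 0 < Q) (hA : 0 ≤ A) :
    ∫⁻ x in Ioo (0 : ℝ) 1, ENNReal.ofReal (x ^ (a - 1) * (Q + A * x) ^ (-(a + 1))) =
      ENNReal.ofReal ((Q + A) ^ (-a) / (a * Q)) := by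
  have hpos {x : ℝ} (hx : 0 ≤ x) : 0 < Q + A * x := by positivity
  have hcont : ContinuousOn (fun x : ℝ => x ^ a * (Q + A * x) ^ (-a)) (Icc 0 1) := fun x hx =>
    ((continuousAt_rpow_const x a (Or.inr ha.le)).mul
      ((by fun_prop : ContinuousAt (fun x => Q + A * x) x).rpow_const
        (Or.inl (hpos hx.1).ne'))).continuousWithinAt
  have hderiv : ∀ x ∈ Ioo (0 : ℝ) 1, HasDerivAt (fun x => x ^ a * (Q + A * x) ^ (-a))
      (a * Q * (x ^ (a - 1) * (Q + A * x) ^ (-(a + 1)))) x := fun x hx =>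
    hasDerivAt_rpow_mul_affine_rpow a hx.1 (hpos hx.1.le)
  have hnonneg : ∀ x ∈ Ioo (0 : ℝ) 1, 0 ≤ x ^ (a - 1) * (Q + A * x) ^ (-(a + 1)) := fun x hx =>
    mul_nonneg (rpow_nonneg hx.1.le _) (rpow_nonneg (hpos hx.1.le).le _)
  have hint := intervalIntegral.integrableOn_deriv_of_nonneg hcont hderiv fun x hx =>
    mul_nonneg (by positivity) (hnonneg x hx)
  have hFTC := intervalIntegral.integral_eq_sub_of_hasDerivAt_of_le zero_le_one hcont hderiv
    ((intervalIntegrable_iff_integrableOn_Ioc_of_le zero_le_one).2 hint)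
  have hint' : IntegrableOn (fun x => x ^ (a - 1) * (Q + A * x) ^ (-(a + 1))) (Ioo 0 1) :=
    (integrable_const_mul_iff (IsUnit.mk0 _ (by positivity : a * Q ≠ 0)) _).1
      (hint.mono_set Ioo_subset_Ioc_self)
  rw [← ofReal_integral_eq_lintegral_ofReal hint'
    ((ae_restrict_iff' measurableSet_Ioo).2 (.of_forall hnonneg))]
  congr 1
  rw [intervalIntegral.integral_const_mul, intervalIntegral.integral_of_le zero_le_one,
    integral_Ioc_eq_integral_Ioo] at hFTC
  rw [eq_div_iff (by positivity), mul_comm, hFTC]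
  simp [ha.ne']

lemma lintegral_Ioo_comp_one_sub (f : ℝ → ℝ≥0∞) :
    ∫⁻ u in Ioo (0 : ℝ) 1, f (1 - u) = ∫⁻ u in Ioo (0 : ℝ) 1, f u := by
  have h := (Measure.measurePreserving_sub_left volume (1 : ℝ)).setLIntegral_comp_preimage_emb
    (MeasurableEquiv.subLeft (1 : ℝ)).measurableEmbedding f (Ioo 0 1)
  simpa using h

lemma setLIntegral_Icc_le_two_mul {f : ℝ → ℝ≥0∞} (hf : ∀ u ∈ Ioo (0 : ℝ) 1, f (-u) ≤ f u) :
    ∫⁻ u in Icc (-1 : ℝ) 1, f u ≤ 2 * ∫⁻ u in Ioo (0 : ℝ) 1, f u := by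
  have hneg : ∫⁻ u in Ioo (-1 : ℝ) 0, f u = ∫⁻ u in Ioo (0 : ℝ) 1, f (-u) := by
    simpa using ((Measure.measurePreserving_neg (volume : Measure ℝ)).setLIntegral_comp_preimage_emb
      (MeasurableEquiv.neg ℝ).measurableEmbedding f (Ioo (-1) 0)).symm
  calc ∫⁻ u in Icc (-1 : ℝ) 1, f u = ∫⁻ u in Ioo (-1 : ℝ) 0 ∪ Ioo 0 1, f u := by
        refine setLIntegral_congr (((Ioo_ae_eq_Ioc.union Ioo_ae_eq_Ioc).trans ?_).symm)
        rw [Ioc_union_Ioc_eq_Ioc (by norm_num) zero_le_one]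
        exact Ioc_ae_eq_Icc
    _ ≤ (∫⁻ u in Ioo (-1 : ℝ) 0, f u) + ∫⁻ u in Ioo (0 : ℝ) 1, f u := lintegral_union_le _ _ _
    _ ≤ (∫⁻ u in Ioo (0 : ℝ) 1, f u) + ∫⁻ u in Ioo (0 : ℝ) 1, f u := by
        rw [hneg]
        gcongr ?_ + _
        exact setLIntegral_mono' measurableSet_Ioo hf
    _ = 2 * ∫⁻ u in Ioo (0 : ℝ) 1, f u := (two_mul _).symm

lemma one_sub_sq_rpow_le (a : ℝ) {u : ℝ} (hu : u ∈ Ioo (0 : ℝ) 1) :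
    (1 - u ^ 2) ^ (a - 1) ≤ 2 ^ |a - 1| * (1 - u) ^ (a - 1) := by
  obtain ⟨h0, h1⟩ := hu
  have hle : (1 + u) ^ (a - 1) ≤ 2 ^ |a - 1| :=
    (rpow_le_rpow_of_exponent_le (by linarith) (le_abs_self _)).trans
      (rpow_le_rpow (by linarith) (by linarith) (abs_nonneg _))
  rw [show 1 - u ^ 2 = (1 + u) * (1 - u) by ring, mul_rpow (by linarith) (by linarith)]
  gcongr

lemma lintegral_one_sub_sq_rpow_mul_rpow_le (ha : 0 < a) (hQ : 0 < Q) (hA : 0 ≤ A) :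
    ∫⁻ u in Icc (-1 : ℝ) 1,
        ENNReal.ofReal ((1 - u ^ 2) ^ (a - 1) * (Q + A * (1 - u)) ^ (-(a + 1))) ≤
      ENNReal.ofReal (2 * 2 ^ |a - 1| / a * (Q⁻¹ * (Q + A) ^ (-a))) := by
  calc _ ≤ 2 * ∫⁻ u in Ioo (0 : ℝ) 1,
          ENNReal.ofReal ((1 - u ^ 2) ^ (a - 1) * (Q + A * (1 - u)) ^ (-(a + 1))) := by
        refine setLIntegral_Icc_le_two_mul fun u ⟨h0, h1⟩ => ENNReal.ofReal_le_ofReal ?_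
        rw [neg_sq]
        gcongr ?_ * ?_
        · exact rpow_nonneg (by nlinarith) _
        · exact rpow_le_rpow_of_nonpos (by nlinarith) (by nlinarith) (by linarith)
    _ ≤ 2 * ∫⁻ u in Ioo (0 : ℝ) 1, ENNReal.ofReal (2 ^ |a - 1|) *
          ENNReal.ofReal ((1 - u) ^ (a - 1) * (Q + A * (1 - u)) ^ (-(a + 1))) := by
        gcongr 2 * ?_
        refine setLIntegral_mono' measurableSet_Ioo fun u hu => ?_
        rw [← ENNReal.ofReal_mul (by positivity), ← mul_assoc]
        gcongr
        · exact rpow_nonneg (by nlinarith [hu.2]) _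
        · exact one_sub_sq_rpow_le a hu
    _ = ENNReal.ofReal 2 * (ENNReal.ofReal (2 ^ |a - 1|) *
          ENNReal.ofReal ((Q + A) ^ (-a) / (a * Q))) := by
        rw [lintegral_const_mul' _ _ ENNReal.ofReal_ne_top, ENNReal.ofReal_ofNat,
          lintegral_Ioo_comp_one_sub fun x => .ofReal (x ^ (a - 1) * (Q + A * x) ^ (-(a + 1))),
          lintegral_rpow_mul_affine_rpow ha hQ hA]
    _ = _ := by
        rw [← ENNReal.ofReal_mul (by positivity), ← ENNReal.ofReal_mul (by positivity)]
        congr 1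
        field_simp

lemma rpow_neg_le_mul_rpow_neg {x : ℝ} (σ : ℝ) (hQ : 0 < Q) (hx : Q ≤ x) (hτ : σ ≤ τ) :
    x ^ (-τ) ≤ Q ^ (σ - τ) * x ^ (-σ) := by
  have hx0 := hQ.trans_le hx
  rw [show -τ = (σ - τ) + -σ by ring, rpow_add hx0]
  gcongr ?_ * _
  exact rpow_le_rpow_of_nonpos hQ hx (by linarith)

lemma ae_PiMeasure_mem_Icc (α : ℝ) : ∀ᵐ u ∂PiMeasure α, u ∈ Icc (-1 : ℝ) 1 := by
  unfold PiMeasure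
  split_ifs
  · refine Measure.ae_smul_measure (ae_add_measure_iff.2 ⟨?_, ?_⟩) _ <;>
      exact (ae_dirac_iff measurableSet_Icc).2 (by norm_num)
  · exact (withDensity_absolutelyContinuous _ _).ae_le (ae_restrict_mem measurableSet_Icc)

lemma exists_lintegral_PiMeasure_rpow_le (hα : -(1 / 2) ≤ α) :
    ∃ K, 0 < K ∧ ∀ Q A, 0 < Q → 0 ≤ A →
      ∫⁻ u, ENNReal.ofReal ((Q + A * (1 - u)) ^ (-(α + 3 / 2))) ∂PiMeasure α ≤
        ENNReal.ofReal (K * (Q⁻¹ * (Q + A) ^ (-(α + 1 / 2)))) := by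
  rcases hα.eq_or_lt with rfl | hlt
  · refine ⟨1, one_pos, fun Q A hQ hA => ?_⟩
    have h : (Q + A * (1 - -1))⁻¹ ≤ Q⁻¹ := by gcongr; linarith
    have hint : ∫⁻ u, ENNReal.ofReal ((Q + A * (1 - u)) ^ (-(-(1 / 2) + 3 / 2 : ℝ)))
          ∂PiMeasure (-(1 / 2)) =
        2⁻¹ * (ENNReal.ofReal (Q + A * (1 - -1))⁻¹ + ENNReal.ofReal Q⁻¹) := by
      norm_num [PiMeasure, rpow_neg_one, mul_add]
    rw [hint]
    calc _ ≤ 2⁻¹ * (ENNReal.ofReal Q⁻¹ + ENNReal.ofReal Q⁻¹) := by gcongr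
      _ = ENNReal.ofReal (1 * (Q⁻¹ * (Q + A) ^ (-(-(1 / 2) + 1 / 2 : ℝ)))) := by
        rw [← two_mul, ← mul_assoc, ENNReal.inv_mul_cancel (by simp) (by simp)]
        norm_num
  · have ha : 0 < α + 1 / 2 := by linarith
    set c := Gamma (α + 1) / (√π * Gamma (α + 1 / 2))
    have hc : 0 < c :=
      div_pos (Gamma_pos_of_pos (by linarith)) (mul_pos (by positivity) (Gamma_pos_of_pos ha))
    refine ⟨c * (2 * 2 ^ |α + 1 / 2 - 1| / (α + 1 / 2)), by positivity, fun Q A hQ hA => ?_⟩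
    rw [PiMeasure, if_neg hlt.ne', lintegral_withDensity_eq_lintegral_mul _ (by fun_prop)
      (by fun_prop), mul_assoc c, ENNReal.ofReal_mul hc.le]
    refine le_trans (le_of_eq ?_)
      (mul_le_mul_right (lintegral_one_sub_sq_rpow_mul_rpow_le ha hQ hA) _)
    rw [← lintegral_const_mul' _ _ ENNReal.ofReal_ne_top]
    refine setLIntegral_congr_fun measurableSet_Icc fun u hu => ?_
    have hu : 0 ≤ 1 - u ^ 2 := by nlinarith [hu.1, hu.2]
    change ENNReal.ofReal (c * _) * _ = _
    rw [← ENNReal.ofReal_mul (by positivity), ← ENNReal.ofReal_mul hc.le, mul_assoc,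
      show α - 1 / 2 = α + 1 / 2 - 1 by ring, show α + 3 / 2 = α + 1 / 2 + 1 by ring]

lemma isFiniteMeasure_PiMeasure (hα : -(1 / 2) ≤ α) : IsFiniteMeasure (PiMeasure α) := by
  obtain ⟨K, -, hK⟩ := exists_lintegral_PiMeasure_rpow_le hα
  refine ⟨lt_of_le_of_lt ?_ (ENNReal.ofReal_lt_top (r := K * (1⁻¹ * (1 + 0) ^ (-(α + 1 / 2)))))⟩
  simpa using hK 1 0 one_pos le_rfl

/-- The measure `Π_α ⊗ Π_β`, over which the kernel `Hker α β` is an average of `Psi α β`. -/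
noncomputable def PiProd (α β : ℝ) : Measure (ℝ × ℝ) := (PiMeasure α).prod (PiMeasure β)

lemma isFiniteMeasure_PiProd (hα : -(1 / 2) ≤ α) (hβ : -(1 / 2) ≤ β) :
    IsFiniteMeasure (PiProd α β) :=
  have := isFiniteMeasure_PiMeasure hα
  have := isFiniteMeasure_PiMeasure hβ
  inferInstanceAs (IsFiniteMeasure ((PiMeasure α).prod (PiMeasure β)))

/-- The square `[-1, 1]²`, on which `PiProd α β` is concentrated. -/
def symmSquare : Set (ℝ × ℝ) := Icc (-1) 1 ×ˢ Icc (-1) 1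

lemma isCompact_symmSquare : IsCompact symmSquare := isCompact_Icc.prod isCompact_Icc

lemma ae_PiProd_mem_symmSquare (hα : -(1 / 2) ≤ α) (hβ : -(1 / 2) ≤ β) :
    ∀ᵐ w ∂PiProd α β, w ∈ symmSquare := by
  have := isFiniteMeasure_PiMeasure hα
  have := isFiniteMeasure_PiMeasure hβ
  exact (Measure.quasiMeasurePreserving_fst.ae (ae_PiMeasure_mem_Icc α)).and
    (Measure.quasiMeasurePreserving_snd.ae (ae_PiMeasure_mem_Icc β))

lemma exists_lintegral_PiMeasure_rpow_le_of_add (hα : -(1 / 2) ≤ α) (hβ : -(1 / 2) ≤ β) :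
    ∃ K, 0 < K ∧ ∀ Q B, 0 < Q → 0 ≤ B →
      ∫⁻ v, ENNReal.ofReal ((Q + B * (1 - v)) ^ (-(α + β + 2))) ∂PiMeasure β ≤
        ENNReal.ofReal (K * (Q ^ (-(α + 3 / 2)) * (Q + B) ^ (-(β + 1 / 2)))) := by
  obtain ⟨K, hK, hle⟩ := exists_lintegral_PiMeasure_rpow_le hβ
  refine ⟨K, hK, fun Q B hQ hB => ?_⟩
  calc _ ≤ ∫⁻ v, ENNReal.ofReal (Q ^ (-(α + 1 / 2))) *
          ENNReal.ofReal ((Q + B * (1 - v)) ^ (-(β + 3 / 2))) ∂PiMeasure β := by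
        refine lintegral_mono_ae ((ae_PiMeasure_mem_Icc β).mono fun v hv => ?_)
        rw [← ENNReal.ofReal_mul (by positivity),
          show -(α + 1 / 2) = β + 3 / 2 - (α + β + 2) by ring]
        exact ENNReal.ofReal_le_ofReal <| rpow_neg_le_mul_rpow_neg _ hQ
          (le_add_of_nonneg_right (mul_nonneg hB (by linarith [hv.2]))) (by linarith)
    _ ≤ ENNReal.ofReal (Q ^ (-(α + 1 / 2))) *
          ENNReal.ofReal (K * (Q⁻¹ * (Q + B) ^ (-(β + 1 / 2)))) := by
        rw [lintegral_const_mul' _ _ ENNReal.ofReal_ne_top]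
        gcongr
        exact hle Q B hQ hB
    _ = _ := by
        rw [← ENNReal.ofReal_mul (by positivity), show -(α + 3 / 2) = -(α + 1 / 2) - 1 by ring,
          rpow_sub_one hQ.ne']
        ring_nf

lemma exists_lintegral_PiProd_rpow_le (hα : -(1 / 2) ≤ α) (hβ : -(1 / 2) ≤ β) :
    ∃ K, 0 < K ∧ ∀ Q A B, 0 < Q → 0 ≤ A → 0 ≤ B →
      ∫⁻ w, ENNReal.ofReal ((Q + A * (1 - w.1) + B * (1 - w.2)) ^ (-(α + β + 2))) ∂PiProd α β ≤
        ENNReal.ofReal (K * (Q⁻¹ * (Q + A) ^ (-(α + 1 / 2)) * (Q + B) ^ (-(β + 1 / 2)))) := by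
  have := isFiniteMeasure_PiMeasure hβ
  obtain ⟨K, hK, hα_le⟩ := exists_lintegral_PiMeasure_rpow_le hα
  obtain ⟨L, hL, hβ_le⟩ := exists_lintegral_PiMeasure_rpow_le_of_add hα hβ
  refine ⟨K * L, by positivity, fun Q A B hQ hA hB => ?_⟩
  have inner_le : ∀ u ∈ Icc (-1 : ℝ) 1,
      ∫⁻ v, ENNReal.ofReal ((Q + A * (1 - u) + B * (1 - v)) ^ (-(α + β + 2))) ∂PiMeasure β ≤
        ENNReal.ofReal (L * (Q + B) ^ (-(β + 1 / 2))) *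
          ENNReal.ofReal ((Q + A * (1 - u)) ^ (-(α + 3 / 2))) := by
    intro u hu
    have hu : 0 ≤ A * (1 - u) := mul_nonneg hA (by linarith [hu.2])
    refine (hβ_le _ B (by positivity) hB).trans ?_
    rw [← ENNReal.ofReal_mul (by positivity)]
    have hmono : (Q + A * (1 - u) + B) ^ (-(β + 1 / 2)) ≤ (Q + B) ^ (-(β + 1 / 2)) :=
      rpow_le_rpow_of_nonpos (by positivity) (by linarith) (by linarith)
    rw [mul_assoc, mul_comm ((Q + B) ^ _)]
    gcongr
  rw [PiProd, lintegral_prod _ (by fun_prop)]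
  calc _ ≤ ∫⁻ u, ENNReal.ofReal (L * (Q + B) ^ (-(β + 1 / 2))) *
          ENNReal.ofReal ((Q + A * (1 - u)) ^ (-(α + 3 / 2))) ∂PiMeasure α :=
        lintegral_mono_ae ((ae_PiMeasure_mem_Icc α).mono inner_le)
    _ = ENNReal.ofReal (L * (Q + B) ^ (-(β + 1 / 2))) *
          ∫⁻ u, ENNReal.ofReal ((Q + A * (1 - u)) ^ (-(α + 3 / 2))) ∂PiMeasure α :=
        lintegral_const_mul' _ _ ENNReal.ofReal_ne_top
    _ ≤ ENNReal.ofReal (L * (Q + B) ^ (-(β + 1 / 2))) *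
          ENNReal.ofReal (K * (Q⁻¹ * (Q + A) ^ (-(α + 1 / 2)))) := by
        gcongr
        exact hα_le Q A hQ hA
    _ = _ := by
        rw [← ENNReal.ofReal_mul (by positivity)]
        ring_nf

end PiMeasure

/-! ### The function `q` and Jacobi balls -/

section Geometry

variable {α β θ φ u v x y z r : ℝ}

lemma qfun_eq_qfun_one_one_add (θ φ u v : ℝ) :
    qfun θ φ u v = qfun θ φ 1 1 + sin (θ / 2) * sin (φ / 2) * (1 - u)
      + cos (θ / 2) * cos (φ / 2) * (1 - v) := by
  unfold qfun; ring

lemma qfun_one_one (θ φ : ℝ) : qfun θ φ 1 1 = 1 - cos ((θ - φ) / 2) := by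
  rw [qfun, sub_div, cos_sub]; ring

lemma qfun_comm (θ φ u v : ℝ) : qfun θ φ u v = qfun φ θ u v := by
  unfold qfun; ring

lemma continuous_qfun : Continuous fun w : ℝ × ℝ => qfun θ φ w.1 w.2 := by
  unfold qfun; fun_prop

lemma sin_half_pos (hθ : θ ∈ Ioo 0 π) : 0 < sin (θ / 2) :=
  sin_pos_of_pos_of_lt_pi (by linarith [hθ.1]) (by linarith [hθ.2, pi_pos])

lemma cos_half_pos (hθ : θ ∈ Ioo 0 π) : 0 < cos (θ / 2) :=
  cos_pos_of_mem_Ioo ⟨by linarith [hθ.1, pi_pos], by linarith [hθ.2]⟩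

lemma sq_abs_sub_le_qfun_one_one (hθ : θ ∈ Ioo 0 π) (hφ : φ ∈ Ioo 0 π) :
    |θ - φ| ^ 2 ≤ 20 * qfun θ φ 1 1 := by
  have hcos : cos ((θ - φ) / 2) ≤ 1 - 2 / π ^ 2 * ((θ - φ) / 2) ^ 2 :=
    cos_le_one_sub_mul_cos_sq <| abs_le.2
      ⟨by linarith [hθ.1, hφ.2, pi_pos], by linarith [hθ.2, hφ.1, pi_pos]⟩
  have hpi : 1 / 5 ≤ 2 / π ^ 2 := by
    rw [div_le_div_iff₀ (by norm_num) (by positivity)]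
    nlinarith [pi_lt_d2, pi_pos]
  rw [sq_abs, qfun_one_one]
  nlinarith [mul_le_mul_of_nonneg_right hpi (sq_nonneg ((θ - φ) / 2))]

lemma qfun_one_one_pos (hθ : θ ∈ Ioo 0 π) (hφ : φ ∈ Ioo 0 π) (hne : θ ≠ φ) :
    0 < qfun θ φ 1 1 := by
  have := pow_pos (abs_pos.2 (sub_ne_zero.2 hne)) 2
  linarith [sq_abs_sub_le_qfun_one_one hθ hφ]

lemma qfun_one_one_le (hθ : θ ∈ Ioo 0 π) (hφ : φ ∈ Ioo 0 π) (hu : u ≤ 1) (hv : v ≤ 1) :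
    qfun θ φ 1 1 ≤ qfun θ φ u v := by
  rw [qfun_eq_qfun_one_one_add θ φ u v, add_assoc]
  have hs := mul_pos (sin_half_pos hθ) (sin_half_pos hφ)
  have hc := mul_pos (cos_half_pos hθ) (cos_half_pos hφ)
  exact le_add_of_nonneg_right
    (add_nonneg (mul_nonneg hs.le (by linarith)) (mul_nonneg hc.le (by linarith)))

lemma qfun_pos (hθ : θ ∈ Ioo 0 π) (hφ : φ ∈ Ioo 0 π) (hne : θ ≠ φ) (hu : u ≤ 1) (hv : v ≤ 1) :
    0 < qfun θ φ u v :=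
  (qfun_one_one_pos hθ hφ hne).trans_le (qfun_one_one_le hθ hφ hu hv)

/-- The derivative of `qfun` in its first argument. -/
noncomputable def qfunDeriv (θ φ u v : ℝ) : ℝ :=
  (v * sin (θ / 2) * cos (φ / 2) - u * cos (θ / 2) * sin (φ / 2)) / 2

lemma hasDerivAt_qfun (θ φ u v : ℝ) :
    HasDerivAt (fun θ => qfun θ φ u v) (qfunDeriv θ φ u v) θ := by
  have hs := (((hasDerivAt_id θ).div_const 2).sin.const_mul u).mul_const (sin (φ / 2))
  have hc := (((hasDerivAt_id θ).div_const 2).cos.const_mul v).mul_const (cos (φ / 2))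
  refine ((hs.const_sub 1).sub hc).congr_deriv ?_
  simp only [qfunDeriv, id]
  ring

lemma sq_two_mul_qfunDeriv_add_sq_one_sub_qfun_le
    (hu : u ∈ Icc (-1 : ℝ) 1) (hv : v ∈ Icc (-1 : ℝ) 1) :
    (2 * qfunDeriv θ φ u v) ^ 2 + (1 - qfun θ φ u v) ^ 2 ≤ 1 := by
  calc (2 * qfunDeriv θ φ u v) ^ 2 + (1 - qfun θ φ u v) ^ 2
      = (u ^ 2 * sin (φ / 2) ^ 2 + v ^ 2 * cos (φ / 2) ^ 2)
          * (sin (θ / 2) ^ 2 + cos (θ / 2) ^ 2) := by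
        unfold qfunDeriv qfun; ring
    _ ≤ 1 * sin (φ / 2) ^ 2 + 1 * cos (φ / 2) ^ 2 := by
        rw [sin_sq_add_cos_sq, mul_one]
        gcongr <;> rw [sq_le_one_iff_abs_le_one, abs_le]
        exacts [hu, hv]
    _ = 1 := by rw [one_mul, one_mul, sin_sq_add_cos_sq]

lemma abs_qfunDeriv_le_one (hu : u ∈ Icc (-1 : ℝ) 1) (hv : v ∈ Icc (-1 : ℝ) 1) :
    |qfunDeriv θ φ u v| ≤ 1 := by
  rw [← sq_le_one_iff_abs_le_one]
  nlinarith [sq_two_mul_qfunDeriv_add_sq_one_sub_qfun_le (θ := θ) (φ := φ) hu hv]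

lemma abs_qfunDeriv_le_sqrt (hu : u ∈ Icc (-1 : ℝ) 1) (hv : v ∈ Icc (-1 : ℝ) 1) :
    |qfunDeriv θ φ u v| ≤ √(qfun θ φ u v) := by
  refine abs_le_sqrt ?_
  nlinarith [sq_two_mul_qfunDeriv_add_sq_one_sub_qfun_le (θ := θ) (φ := φ) hu hv]

lemma qfun_le_two (hu : u ∈ Icc (-1 : ℝ) 1) (hv : v ∈ Icc (-1 : ℝ) 1) : qfun θ φ u v ≤ 2 := by
  nlinarith [sq_two_mul_qfunDeriv_add_sq_one_sub_qfun_le (θ := θ) (φ := φ) hu hv]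

lemma abs_qfun_sub_qfun_le (hu : u ∈ Icc (-1 : ℝ) 1) (hv : v ∈ Icc (-1 : ℝ) 1) (x θ : ℝ) :
    |qfun x φ u v - qfun θ φ u v| ≤ |x - θ| := by
  simpa using convex_univ.norm_image_sub_le_of_norm_hasDerivWithin_le
    (fun y _ => (hasDerivAt_qfun y φ u v).hasDerivWithinAt)
    (fun y _ => abs_qfunDeriv_le_one hu hv) (mem_univ θ) (mem_univ x)

lemma sq_le_four_mul_mul_add_sq (hx : 0 ≤ x) (hy : |x - y| ≤ r / 2) (hz : |z - x| ≤ r / 2) :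
    z ^ 2 ≤ 4 * (x * y) + r ^ 2 := by
  have hz : |z| ≤ x + r / 2 := by linarith [abs_sub_abs_le_abs_sub z x, abs_of_nonneg hx]
  have hy : x - r / 2 ≤ y := by linarith [(abs_le.1 hy).2]
  calc z ^ 2 ≤ (x + r / 2) ^ 2 := sq_le_sq' (by linarith [neg_abs_le z]) ((le_abs_self z).trans hz)
    _ ≤ 4 * (x * (x - r / 2)) + r ^ 2 := by nlinarith [sq_nonneg (x - r / 2)]
    _ ≤ 4 * (x * y) + r ^ 2 := by gcongr

lemma abs_sin_half_sub_le (x y : ℝ) : |sin (x / 2) - sin (y / 2)| ≤ |x - y| / 2 := by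
  simpa [← sub_div, abs_div] using abs_sin_sub_sin_le (x / 2) (y / 2)

lemma abs_cos_half_sub_le (x y : ℝ) : |cos (x / 2) - cos (y / 2)| ≤ |x - y| / 2 := by
  simpa [← sub_div, abs_div] using abs_cos_sub_cos_le (x / 2) (y / 2)

lemma sq_sin_half_le_qfun (hθ : θ ∈ Ioo 0 π) (hφ : φ ∈ Ioo 0 π) (hx : |x - θ| ≤ |θ - φ|) :
    sin (x / 2) ^ 2 ≤ 20 * qfun θ φ 0 1 := by
  have h := sq_le_four_mul_mul_add_sq (sin_half_pos hθ).le (abs_sin_half_sub_le θ φ)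
    ((abs_sin_half_sub_le x θ).trans (by linarith))
  have hpos := mul_pos (sin_half_pos hθ) (sin_half_pos hφ)
  rw [qfun_eq_qfun_one_one_add]
  linarith [sq_abs_sub_le_qfun_one_one hθ hφ]

lemma sq_cos_half_le_qfun (hθ : θ ∈ Ioo 0 π) (hφ : φ ∈ Ioo 0 π) (hx : |x - θ| ≤ |θ - φ|) :
    cos (x / 2) ^ 2 ≤ 20 * qfun θ φ 1 0 := by
  have h := sq_le_four_mul_mul_add_sq (cos_half_pos hθ).le (abs_cos_half_sub_le θ φ)
    ((abs_cos_half_sub_le x θ).trans (by linarith))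
  have hpos := mul_pos (cos_half_pos hθ) (cos_half_pos hφ)
  rw [qfun_eq_qfun_one_one_add]
  linarith [sq_abs_sub_le_qfun_one_one hθ hφ]

lemma rpow_two_mul_add_one_le {c : ℝ} (hα : -(1 / 2) ≤ α) (hx : 0 ≤ x) (h : x ^ 2 ≤ c) :
    x ^ (2 * α + 1) ≤ c ^ (α + 1 / 2) := by
  rw [show 2 * α + 1 = (2 : ℕ) * (α + 1 / 2) by push_cast; ring, rpow_natCast_mul hx]
  exact rpow_le_rpow (sq_nonneg x) h (by linarith)

lemma measurableSet_jacobiBall (θ r : ℝ) : MeasurableSet (jacobiBall θ r) :=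
  measurableSet_Ioo.inter measurableSet_Ioo

lemma jacobiMeasure_jacobiBall (α β θ r : ℝ) :
    jacobiMeasure α β (jacobiBall θ r) = ∫⁻ x in jacobiBall θ r,
      ENNReal.ofReal (sin (x / 2) ^ (2 * α + 1) * cos (x / 2) ^ (2 * β + 1)) := by
  have hm := measurableSet_jacobiBall θ r
  rw [jacobiMeasure, withDensity_apply _ hm, Measure.restrict_restrict hm,
    inter_eq_self_of_subset_left (show jacobiBall θ r ⊆ Ioo 0 π from inter_subset_right)]

lemma jacobiMeasure_jacobiBall_le (hα : -(1 / 2) ≤ α) (hβ : -(1 / 2) ≤ β)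
    (hθ : θ ∈ Ioo 0 π) (hφ : φ ∈ Ioo 0 π) :
    jacobiMeasure α β (jacobiBall θ |θ - φ|) ≤ ENNReal.ofReal
      ((20 * qfun θ φ 0 1) ^ (α + 1 / 2) * (20 * qfun θ φ 1 0) ^ (β + 1 / 2) * (2 * |θ - φ|)) := by
  have hs : 0 ≤ 20 * qfun θ φ 0 1 :=
    (sq_nonneg _).trans (sq_sin_half_le_qfun (x := θ) hθ hφ (by simp))
  have hc : 0 ≤ 20 * qfun θ φ 1 0 :=
    (sq_nonneg _).trans (sq_cos_half_le_qfun (x := θ) hθ hφ (by simp))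
  rw [jacobiMeasure_jacobiBall, ENNReal.ofReal_mul (by positivity)]
  calc _ ≤ ∫⁻ _ in jacobiBall θ |θ - φ|, ENNReal.ofReal
          ((20 * qfun θ φ 0 1) ^ (α + 1 / 2) * (20 * qfun θ φ 1 0) ^ (β + 1 / 2)) := by
        refine setLIntegral_mono' (measurableSet_jacobiBall _ _) fun x ⟨hx, hxπ⟩ =>
          ENNReal.ofReal_le_ofReal ?_
        have hx : |x - θ| ≤ |θ - φ| := abs_le.2 ⟨by linarith [hx.1], by linarith [hx.2]⟩
        have hcos := (cos_half_pos hxπ).le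
        gcongr
        · exact rpow_two_mul_add_one_le hα (sin_half_pos hxπ).le (sq_sin_half_le_qfun hθ hφ hx)
        · exact rpow_two_mul_add_one_le hβ hcos (sq_cos_half_le_qfun hθ hφ hx)
    _ ≤ _ := by
        rw [setLIntegral_const]
        gcongr
        refine (measure_mono inter_subset_left).trans_eq ?_
        rw [volume_Ioo]
        ring_nf

lemma jacobiMeasure_jacobiBall_pos (α β : ℝ) (hθ : θ ∈ Ioo 0 π) (hr : 0 < r) :
    0 < jacobiMeasure α β (jacobiBall θ r) := by
  rw [jacobiMeasure_jacobiBall, setLIntegral_pos_iff (by fun_prop)]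
  refine ((isOpen_Ioo.inter isOpen_Ioo).measure_pos volume ⟨θ, ⟨by linarith, by linarith⟩, hθ⟩
    ).trans_le (measure_mono fun x hx => ⟨?_, hx⟩)
  exact (ENNReal.ofReal_pos.2 (mul_pos (rpow_pos_of_pos (sin_half_pos hx.2) _)
    (rpow_pos_of_pos (cos_half_pos hx.2) _))).ne'

lemma abs_sub_mul_jacobiMeasure_le (hα : -(1 / 2) ≤ α) (hβ : -(1 / 2) ≤ β)
    (hθ : θ ∈ Ioo 0 π) (hφ : φ ∈ Ioo 0 π) :
    |θ - φ| * (jacobiMeasure α β (jacobiBall θ |θ - φ|)).toReal ≤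
      2 * 20 ^ (α + β + 2) *
        (qfun θ φ 1 1 * qfun θ φ 0 1 ^ (α + 1 / 2) * qfun θ φ 1 0 ^ (β + 1 / 2)) := by
  have hs : 0 ≤ qfun θ φ 0 1 := by
    linarith [sq_nonneg (sin (θ / 2)), sq_sin_half_le_qfun (x := θ) hθ hφ (by simp)]
  have hc : 0 ≤ qfun θ φ 1 0 := by
    linarith [sq_nonneg (cos (θ / 2)), sq_cos_half_le_qfun (x := θ) hθ hφ (by simp)]
  have hμ := ENNReal.toReal_le_of_le_ofReal (by positivity)
    (jacobiMeasure_jacobiBall_le hα hβ hθ hφ)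
  calc _ ≤ |θ - φ| * ((20 * qfun θ φ 0 1) ^ (α + 1 / 2) * (20 * qfun θ φ 1 0) ^ (β + 1 / 2)
            * (2 * |θ - φ|)) := by gcongr
    _ = 2 * 20 ^ (α + β + 1) * |θ - φ| ^ 2
          * (qfun θ φ 0 1 ^ (α + 1 / 2) * qfun θ φ 1 0 ^ (β + 1 / 2)) := by
        rw [mul_rpow (by norm_num) hs, mul_rpow (by norm_num) hc,
          show α + β + 1 = (α + 1 / 2) + (β + 1 / 2) by ring,
          rpow_add (by norm_num) (α + 1 / 2)]
        ring
    _ ≤ 2 * 20 ^ (α + β + 1) * (20 * qfun θ φ 1 1)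
          * (qfun θ φ 0 1 ^ (α + 1 / 2) * qfun θ φ 1 0 ^ (β + 1 / 2)) := by
        gcongr
        exact sq_abs_sub_le_qfun_one_one hθ hφ
    _ = _ := by
        rw [show α + β + 2 = α + β + 1 + 1 by ring, rpow_add_one (by norm_num) (α + β + 1)]
        ring

lemma exists_lintegral_qfun_rpow_le (hα : -(1 / 2) ≤ α) (hβ : -(1 / 2) ≤ β) :
    ∃ K, 0 < K ∧ ∀ θ ∈ Ioo 0 π, ∀ φ ∈ Ioo 0 π, θ ≠ φ →
      ∫⁻ w, ENNReal.ofReal (qfun θ φ w.1 w.2 ^ (-(α + β + 2))) ∂PiProd α β ≤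
        ENNReal.ofReal
          (K / (|θ - φ| * (jacobiMeasure α β (jacobiBall θ |θ - φ|)).toReal)) := by
  obtain ⟨K, hK, hle⟩ := exists_lintegral_PiProd_rpow_le hα hβ
  refine ⟨K * (2 * 20 ^ (α + β + 2)), by positivity, fun θ hθ φ hφ hne => ?_⟩
  have hr := abs_pos.2 (sub_ne_zero.2 hne)
  have hq := qfun_one_one_pos hθ hφ hne
  have hs := mul_pos (sin_half_pos hθ) (sin_half_pos hφ)
  have hc := mul_pos (cos_half_pos hθ) (cos_half_pos hφ)
  have hμ : 0 < (jacobiMeasure α β (jacobiBall θ |θ - φ|)).toReal :=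
    ENNReal.toReal_pos (jacobiMeasure_jacobiBall_pos α β hθ hr).ne'
      (ne_top_of_le_ne_top ENNReal.ofReal_ne_top (jacobiMeasure_jacobiBall_le hα hβ hθ hφ))
  have h01 : qfun θ φ 1 1 + sin (θ / 2) * sin (φ / 2) = qfun θ φ 0 1 := by unfold qfun; ring
  have h10 : qfun θ φ 1 1 + cos (θ / 2) * cos (φ / 2) = qfun θ φ 1 0 := by unfold qfun; ring
  have hq01 : 0 < qfun θ φ 0 1 := h01 ▸ add_pos hq hs
  have hq10 : 0 < qfun θ φ 1 0 := h10 ▸ add_pos hq hc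
  simp only [fun w : ℝ × ℝ => qfun_eq_qfun_one_one_add θ φ w.1 w.2]
  refine (hle _ _ _ hq hs.le hc.le).trans (ENNReal.ofReal_le_ofReal ?_)
  rw [h01, h10, rpow_neg hq01.le, rpow_neg hq10.le, ← mul_inv, ← mul_inv, ← div_eq_mul_inv,
    div_le_div_iff₀ (by positivity) (by positivity), mul_assoc]
  exact mul_le_mul_of_nonneg_left (abs_sub_mul_jacobiMeasure_le hα hβ hθ hφ) hK.le

end Geometry

/-! ### Integration in `t` -/

section TimeIntegral

variable {σ s : ℝ}

lemma pow_le_factorial_mul_cosh_sub_one (n : ℕ) (x : ℝ) :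
    x ^ (2 * (n + 1)) ≤ (2 * (n + 1)).factorial * (cosh x - 1) := by
  have h := sum_le_hasSum {0, n + 1}
    (fun i _ => div_nonneg ((even_two_mul i).pow_nonneg x) (Nat.cast_nonneg _)) (hasSum_cosh x)
  rw [Finset.sum_pair n.succ_ne_zero.symm] at h
  rw [← div_le_iff₀' (by positivity)]
  norm_num at h
  linarith

lemma exists_pow_le_mul_cosh_half_sub_one (n : ℕ) :
    ∃ K, 0 < K ∧ ∀ t, (t ^ 2) ^ (n + 1) ≤ K * (cosh (t / 2) - 1) := by
  refine ⟨2 ^ (2 * (n + 1)) * (2 * (n + 1)).factorial, by positivity, fun t => ?_⟩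
  have h := pow_le_factorial_mul_cosh_sub_one n (t / 2)
  rw [div_pow, div_le_iff₀' (by positivity)] at h
  rwa [← pow_mul, mul_assoc]

lemma pow_le_one_add_pow_succ {y : ℝ} (hy : 0 ≤ y) (n : ℕ) : y ^ n ≤ 1 + y ^ (n + 1) := by
  rcases le_total y 1 with h | h
  · exact (pow_le_one₀ hy h).trans (le_add_of_nonneg_right (by positivity))
  · exact (pow_le_pow_right₀ h n.le_succ).trans (le_add_of_nonneg_left zero_le_one)

lemma one_add_pow_le_two_pow_mul {y : ℝ} (hy : 0 ≤ y) (n : ℕ) :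
    (1 + y) ^ n ≤ 2 ^ n * (1 + y ^ n) := by
  calc (1 + y) ^ n ≤ 2 ^ (n - 1) * (1 ^ n + y ^ n) := add_pow_le zero_le_one hy n
    _ ≤ 2 ^ n * (1 + y ^ n) := by
        rw [one_pow]
        gcongr
        exacts [one_le_two, n.sub_le 1]

lemma exists_mul_le_psiDenom (N : ℕ) :
    ∃ c, 0 < c ∧ ∀ t s, 0 < s → s ≤ 2 →
      c * ((t ^ 2 + s) * (1 + (t ^ 2 + s)) ^ N) ≤ psiDenom t s := by
  obtain ⟨K, hK, hK_le⟩ := exists_pow_le_mul_cosh_half_sub_one 0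
  obtain ⟨L, hL, hL_le⟩ := exists_pow_le_mul_cosh_half_sub_one N
  refine ⟨(6 ^ N * (2 + K + 3 * L))⁻¹, by positivity, fun t s hs hs2 => ?_⟩
  rw [inv_mul_le_iff₀ (by positivity)]
  have hX : 0 ≤ cosh (t / 2) - 1 := by linarith [one_le_cosh (t / 2)]
  have hpow : (1 + (t ^ 2 + s)) ^ N ≤ 6 ^ N * (1 + (t ^ 2) ^ N) :=
    calc (1 + (t ^ 2 + s)) ^ N ≤ (3 * (1 + t ^ 2)) ^ N := by gcongr; nlinarith [sq_nonneg t]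
      _ ≤ 3 ^ N * (2 ^ N * (1 + (t ^ 2) ^ N)) := by
          rw [mul_pow]; gcongr; exact one_add_pow_le_two_pow_mul (sq_nonneg t) N
      _ = 6 ^ N * (1 + (t ^ 2) ^ N) := by rw [← mul_assoc, ← mul_pow]; norm_num
  calc (t ^ 2 + s) * (1 + (t ^ 2 + s)) ^ N
      ≤ (t ^ 2 + s) * (6 ^ N * (1 + (t ^ 2) ^ N)) := by gcongr
    _ = 6 ^ N * (t ^ 2 + (t ^ 2) ^ (N + 1) + s + s * (t ^ 2) ^ N) := by ring
    _ ≤ 6 ^ N * (t ^ 2 + (t ^ 2) ^ (N + 1) + s + s * (1 + (t ^ 2) ^ (N + 1))) := by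
        gcongr; exact pow_le_one_add_pow_succ (sq_nonneg t) N
    _ ≤ 6 ^ N * (t ^ 2 + 3 * (t ^ 2) ^ (N + 1) + 2 * s) := by
        gcongr 6 ^ N * ?_
        nlinarith [mul_le_mul_of_nonneg_right hs2 (pow_nonneg (sq_nonneg t) (N + 1))]
    _ ≤ 6 ^ N * ((2 + K + 3 * L) * psiDenom t s) := by
        gcongr 6 ^ N * ?_
        unfold psiDenom
        nlinarith [hK_le t, hL_le t]
    _ = 6 ^ N * (2 + K + 3 * L) * psiDenom t s := by ring

lemma lintegral_Ioi_mul_rpow (hσ : 0 < σ) (hs : 0 < s) :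
    ∫⁻ t in Ioi (0 : ℝ), ENNReal.ofReal (t * (t ^ 2 + s) ^ (-σ - 1)) =
      ENNReal.ofReal (s ^ (-σ) / (2 * σ)) := by
  have hderiv : ∀ t ∈ Ici (0 : ℝ), HasDerivAt (fun t : ℝ => -((t ^ 2 + s) ^ (-σ) / (2 * σ)))
      (t * (t ^ 2 + s) ^ (-σ - 1)) t := by
    intro t _
    have hpow : HasDerivAt (fun t : ℝ => t ^ 2 + s) (2 * t) t := by
      simpa using (hasDerivAt_pow 2 t).add_const s
    refine ((hpow.rpow_const (Or.inl (by positivity))).div_const (2 * σ)).neg.congr_deriv ?_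
    field_simp
  have hnonneg : ∀ t ∈ Ioi (0 : ℝ), 0 ≤ t * (t ^ 2 + s) ^ (-σ - 1) := fun t ht =>
    mul_nonneg (le_of_lt ht) (by positivity)
  have hlim : Tendsto (fun t : ℝ => -((t ^ 2 + s) ^ (-σ) / (2 * σ))) atTop (𝓝 0) := by
    have hsq : Tendsto (fun t : ℝ => t ^ 2 + s) atTop atTop :=
      tendsto_atTop_add_const_right _ _ (tendsto_pow_atTop two_ne_zero)
    simpa using (((tendsto_rpow_neg_atTop hσ).comp hsq).div_const (2 * σ)).neg
  rw [← ofReal_integral_eq_lintegral_ofReal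
      (integrableOn_Ioi_deriv_of_nonneg' hderiv hnonneg hlim)
      ((ae_restrict_iff' measurableSet_Ioi).2 (.of_forall hnonneg)),
    integral_Ioi_of_hasDerivAt_of_nonneg' hderiv hnonneg hlim]
  simp

lemma one_add_div_le {c D E : ℝ} (hc : 0 < c) (hE : 0 < E) (h : c * E ≤ D) :
    (1 + D) / D ≤ (1 + c⁻¹) * ((1 + E) / E) := by
  have hD : 0 < D := (mul_pos hc hE).trans_le h
  have hinv : D⁻¹ ≤ c⁻¹ * E⁻¹ := by rw [← mul_inv]; gcongr
  calc (1 + D) / D = 1 + D⁻¹ := by field_simp; ring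
    _ ≤ 1 + c⁻¹ * E⁻¹ := by gcongr
    _ ≤ 1 + c⁻¹ * E⁻¹ + (c⁻¹ + E⁻¹) := le_add_of_nonneg_right (by positivity)
    _ = (1 + c⁻¹) * ((1 + E) / E) := by field_simp; ring

lemma sqrt_one_add_div_mul_sqrt_le {D : ℝ} (hs : 0 < s) (hs2 : s ≤ 2) (hD : s ≤ D) :
    √((1 + D) / D) * √s ≤ 2 := by
  have hD0 : 0 < D := hs.trans_le hD
  rw [← sqrt_mul (by positivity)]
  refine sqrt_le_iff.2 ⟨zero_le_two, ?_⟩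
  rw [div_mul_eq_mul_div, div_le_iff₀ hD0]
  nlinarith

lemma rpow_mul_rpow_eq_mul_sqrt_mul_pow {D : ℝ} (hD : 0 < D) (σ : ℝ) (k : ℕ) :
    D ^ (-(σ + 1 / 2 + k)) * (1 + D) ^ (1 / 2 + k : ℝ) =
      D ^ (-σ) * (√((1 + D) / D) * ((1 + D) / D) ^ k) := by
  have h1D : 0 < 1 + D := by positivity
  have hR : 0 < (1 + D) / D := by positivity
  rw [sqrt_eq_rpow, ← rpow_natCast, ← rpow_add hR, div_rpow h1D.le hD.le,
    show -(σ + 1 / 2 + (k : ℝ)) = -σ - (1 / 2 + k) by ring, rpow_sub hD]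
  ring

lemma rpow_neg_le_of_mul_le {c D E P : ℝ} (hσ : 1 ≤ σ) (hc : 0 < c) (hE : 0 < E) (hP : 1 ≤ P)
    (h : c * (E * P) ≤ D) : D ^ (-σ) ≤ c ^ (-σ) * (E ^ (-σ) * P⁻¹) := by
  have hP0 : 0 < P := by linarith
  calc D ^ (-σ) ≤ (c * (E * P)) ^ (-σ) :=
        rpow_le_rpow_of_nonpos (by positivity) h (by linarith)
    _ = c ^ (-σ) * (E ^ (-σ) * P ^ (-σ)) := by
        rw [mul_rpow hc.le (by positivity), mul_rpow hE.le hP0.le]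
    _ ≤ c ^ (-σ) * (E ^ (-σ) * P⁻¹) := by
        rw [← rpow_neg_one P]
        gcongr ?_ * (?_ * ?_)
        exact rpow_le_rpow_of_exponent_le hP (by linarith)

lemma exists_psiDenom_rpow_mul_le (hσ : 1 ≤ σ) {k₀ k : ℕ} (hk₀ : 1 ≤ k₀) (hk : k ≤ k₀) :
    ∃ C, 0 < C ∧ ∀ t s, 0 < t → 0 < s → s ≤ 2 →
      psiDenom t s ^ (-(σ + 1 / 2 + k)) * (1 + psiDenom t s) ^ (1 / 2 + k : ℝ) * √s
        * t ^ (2 * k₀ - 1) ≤ C * (t * (t ^ 2 + s) ^ (-σ - 1)) := by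
  obtain ⟨c, hc, hD_ge⟩ := exists_mul_le_psiDenom k₀
  refine ⟨2 * (1 + c⁻¹) ^ k₀ * c ^ (-σ), by positivity, fun t s ht hs hs2 => ?_⟩
  have hD := psiDenom_pos (t := t) hs
  have hcE := hD_ge t s hs hs2
  have hsqrt := sqrt_one_add_div_mul_sqrt_le hs hs2 (le_psiDenom t s)
  rw [rpow_mul_rpow_eq_mul_sqrt_mul_pow hD]
  have hE : 0 < t ^ 2 + s := by positivity
  have htE : t ^ 2 ≤ t ^ 2 + s := by linarith
  generalize psiDenom t s = D at *
  generalize t ^ 2 + s = E at *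
  have hP : 1 ≤ (1 + E) ^ k₀ := one_le_pow₀ (by linarith)
  have hDσ := rpow_neg_le_of_mul_le hσ hc hE hP hcE
  have hR : ((1 + D) / D) ^ k ≤ (1 + c⁻¹) ^ k₀ * ((1 + E) / E) ^ k₀ := by
    rw [← mul_pow]
    refine (pow_le_pow_right₀ ?_ hk).trans (pow_le_pow_left₀ (by positivity) ?_ k₀)
    · rw [le_div_iff₀ hD]; linarith
    · refine one_add_div_le hc hE (le_trans ?_ hcE)
      gcongr
      exact le_mul_of_one_le_right hE.le hP
  obtain ⟨j, rfl⟩ : ∃ j, k₀ = j + 1 := ⟨k₀ - 1, by omega⟩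
  have ht : t ^ (2 * (j + 1) - 1) ≤ t * E ^ j := by
    rw [show 2 * (j + 1) - 1 = 1 + 2 * j by omega, pow_add, pow_one, pow_mul]
    gcongr
  calc D ^ (-σ) * (√((1 + D) / D) * ((1 + D) / D) ^ k) * √s * t ^ (2 * (j + 1) - 1)
      = D ^ (-σ) * ((1 + D) / D) ^ k * (√((1 + D) / D) * √s) * t ^ (2 * (j + 1) - 1) := by ring
    _ ≤ c ^ (-σ) * (E ^ (-σ) * ((1 + E) ^ (j + 1))⁻¹)
          * ((1 + c⁻¹) ^ (j + 1) * ((1 + E) / E) ^ (j + 1)) * 2 * (t * E ^ j) := by gcongr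
    _ = _ := by
        rw [rpow_sub_one hE.ne', div_pow]
        field_simp
        ring

end TimeIntegral

/-! ### The kernels `S_k` -/

section Kernel

variable {α β s θ φ x : ℝ} {k₀ k : ℕ} {w : ℝ × ℝ}

/-- The constant `c_{α,β}` of the Jacobi-Poisson kernel. -/
noncomputable def poissonConst (α β : ℝ) : ℝ :=
  2 ^ (-(α + β + 2)) / (jacobiMeasure α β (Ioo 0 π)).toReal

/-- The time derivative `∂_t^m Ψ^{α,β}(t, s)`. -/
noncomputable def psiTimeDeriv (α β : ℝ) (m : ℕ) (t s : ℝ) : ℝ :=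
  iteratedDeriv m (fun t => Psi α β t s) t

/-- The kernel `S_k^{α,β}(θ, φ) = ∫₀^∞ ∂_t^{2k} H_t^{α,β}(θ, φ) t^{2k₀-1} dt`. For
`α + β = -1` and `k = 0` the integral diverges, and `Sk` is then `0` by convention. -/
noncomputable def Sk (α β : ℝ) (k₀ k : ℕ) (θ φ : ℝ) : ℝ :=
  ∫ t in Ioi (0 : ℝ), iteratedDeriv (2 * k) (fun t' => Hker α β t' θ φ) t * t ^ (2 * k₀ - 1)

lemma isPsiSymbol_Psi (α β : ℝ) :
    IsPsiSymbol (α + β + 2 - 1 / 2) (1 - (α + β + 2)) (Psi α β) :=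
  (IsPsiSymbol.monomial 1 0 (α + β + 2) (by simp) (by simp)).congr fun t s _ => by
    simp [psiMonomial, psiDenom, Psi]

lemma isPsiSymbol_psiTimeDeriv (α β : ℝ) (m : ℕ) :
    IsPsiSymbol (α + β + 2 - 1 / 2 + m / 2) (1 - (α + β + 2)) (psiTimeDeriv α β m) :=
  (isPsiSymbol_Psi α β).iteratedDeriv_left m

lemma contDiff_Psi (hs : 0 < s) : ContDiff ℝ ∞ fun t => Psi α β t s := by
  have hden (t : ℝ) : 0 < cosh (t / 2) - 1 + s := psiDenom_pos hs
  unfold Psi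
  exact .div (by fun_prop) (.rpow_const_of_ne (by fun_prop) fun t => (hden t).ne')
    fun t => (rpow_pos_of_pos (hden t) _).ne'

lemma exists_abs_deriv_psiTimeDeriv_le (hαβ : -1 ≤ α + β) (hk₀ : 1 ≤ k₀) (hk : k ≤ k₀) :
    ∃ C, 0 < C ∧ ∀ t s, 0 < t → 0 < s → s ≤ 2 →
      |deriv (psiTimeDeriv α β (2 * k) t) s| * √s * t ^ (2 * k₀ - 1) ≤
        C * (t * (t ^ 2 + s) ^ (-(α + β + 2) - 1)) := by
  obtain ⟨K, hK, hsymbol⟩ := (isPsiSymbol_psiTimeDeriv α β (2 * k)).deriv_right.exists_abs_le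
  obtain ⟨C, hC, htime⟩ :=
    exists_psiDenom_rpow_mul_le (σ := α + β + 2) (by linarith) hk₀ hk
  refine ⟨(K + 1) * C, by positivity, fun t s ht hs hs2 => ?_⟩
  have hD := psiDenom_pos (t := t) hs
  have hderiv : |deriv (psiTimeDeriv α β (2 * k) t) s| ≤
      (K + 1) * (psiDenom t s ^ (-(α + β + 2 + 1 / 2 + k))
        * (1 + psiDenom t s) ^ (1 / 2 + k : ℝ)) := by
    have hp : α + β + 2 - 1 / 2 + (2 * k : ℕ) / 2 + 1 = α + β + 2 + 1 / 2 + k := by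
      push_cast; ring
    have hpe : α + β + 2 + 1 / 2 + k + (1 - (α + β + 2) - 1) = 1 / 2 + k := by ring
    refine (hp ▸ hsymbol t s hs).trans ?_
    rw [hpe]
    gcongr
    linarith
  calc _ ≤ (K + 1) * (psiDenom t s ^ (-(α + β + 2 + 1 / 2 + k))
          * (1 + psiDenom t s) ^ (1 / 2 + k : ℝ)) * √s * t ^ (2 * k₀ - 1) := by gcongr
    _ ≤ (K + 1) * (C * (t * (t ^ 2 + s) ^ (-(α + β + 2) - 1))) := by
        simp only [mul_assoc (K + 1)]
        exact mul_le_mul_of_nonneg_left (htime t s ht hs hs2) (by positivity)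
    _ = _ := by ring

lemma half_qfun_le_of_abs_sub_le {y : ℝ} (hw : w ∈ symmSquare)
    (hx : |x - θ| ≤ qfun θ φ w.1 w.2 / 2) (hy : y ∈ uIcc θ x) :
    qfun θ φ w.1 w.2 / 2 ≤ qfun y φ w.1 w.2 := by
  linarith [neg_abs_le (qfun y φ w.1 w.2 - qfun θ φ w.1 w.2),
    abs_qfun_sub_qfun_le (φ := φ) hw.1 hw.2 y θ, abs_sub_left_of_mem_uIcc hy]

lemma exists_abs_psiTimeDeriv_qfun_sub_le (hαβ : -1 ≤ α + β) (hk₀ : 1 ≤ k₀) (hk : k ≤ k₀) :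
    ∃ C, 0 < C ∧ ∀ θ φ x t, ∀ w ∈ symmSquare, 0 < t → 0 < qfun θ φ w.1 w.2 →
      |x - θ| ≤ qfun θ φ w.1 w.2 / 2 →
      |psiTimeDeriv α β (2 * k) t (qfun x φ w.1 w.2)
          - psiTimeDeriv α β (2 * k) t (qfun θ φ w.1 w.2)| * t ^ (2 * k₀ - 1) ≤
        C * (t * (t ^ 2 + qfun θ φ w.1 w.2 / 2) ^ (-(α + β + 2) - 1)) * |x - θ| := by
  obtain ⟨C, hC, hle⟩ := exists_abs_deriv_psiTimeDeriv_le hαβ hk₀ hk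
  refine ⟨C, hC, fun θ φ x t w hw ht hq hx => ?_⟩
  set F := psiTimeDeriv α β (2 * k) t
  have hT : 0 < t ^ (2 * k₀ - 1) := by positivity
  have hq_le (y : ℝ) (hy : y ∈ uIcc θ x) := half_qfun_le_of_abs_sub_le hw hx hy
  have hderiv : ∀ y ∈ uIcc θ x, HasDerivWithinAt (fun y => F (qfun y φ w.1 w.2))
      (deriv F (qfun y φ w.1 w.2) * qfunDeriv y φ w.1 w.2) (uIcc θ x) y := fun y hy =>
    (((isPsiSymbol_psiTimeDeriv α β (2 * k)).differentiableAt_right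
      (by linarith [hq_le y hy])).hasDerivAt.comp y (hasDerivAt_qfun y φ _ _)).hasDerivWithinAt
  have hbound : ∀ y ∈ uIcc θ x, ‖deriv F (qfun y φ w.1 w.2) * qfunDeriv y φ w.1 w.2‖ ≤
      C * (t * (t ^ 2 + qfun θ φ w.1 w.2 / 2) ^ (-(α + β + 2) - 1)) / t ^ (2 * k₀ - 1) := by
    intro y hy
    have hqy : 0 < qfun y φ w.1 w.2 := by linarith [hq_le y hy]
    rw [le_div_iff₀ hT, norm_mul, norm_eq_abs, norm_eq_abs]
    calc _ ≤ |deriv F (qfun y φ w.1 w.2)| * √(qfun y φ w.1 w.2) * t ^ (2 * k₀ - 1) := by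
          gcongr
          exact abs_qfunDeriv_le_sqrt hw.1 hw.2
      _ ≤ C * (t * (t ^ 2 + qfun y φ w.1 w.2) ^ (-(α + β + 2) - 1)) :=
          hle t _ ht hqy (qfun_le_two hw.1 hw.2)
      _ ≤ _ := by
          gcongr ?_ * (?_ * ?_)
          exact rpow_le_rpow_of_nonpos (by positivity) (by linarith [hq_le y hy]) (by linarith)
  have hmvt := (convex_uIcc θ x).norm_image_sub_le_of_norm_hasDerivWithin_le hderiv hbound
    left_mem_uIcc right_mem_uIcc
  rwa [div_mul_eq_mul_div, le_div_iff₀ hT] at hmvt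

lemma IsPsiSymbol.continuousOn_comp_qfun {p e : ℝ} {F : ℝ → ℝ → ℝ} (hF : IsPsiSymbol p e F)
    (hθ : θ ∈ Ioo 0 π) (hφ : φ ∈ Ioo 0 π) (hne : θ ≠ φ) :
    ContinuousOn (fun z : ℝ × (ℝ × ℝ) => F z.1 (qfun θ φ z.2.1 z.2.2)) (univ ×ˢ symmSquare) :=
  hF.continuousOn.comp (f := fun z : ℝ × (ℝ × ℝ) => (z.1, qfun θ φ z.2.1 z.2.2))
    (continuous_fst.prodMk (continuous_qfun.comp continuous_snd)).continuousOn
    fun _ hz => ⟨mem_univ _, qfun_pos hθ hφ hne hz.2.1.2 hz.2.2.2⟩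

lemma IsPsiSymbol.integrable_comp_qfun {p e : ℝ} {F : ℝ → ℝ → ℝ} (hF : IsPsiSymbol p e F)
    (hα : -(1 / 2) ≤ α) (hβ : -(1 / 2) ≤ β)
    (hθ : θ ∈ Ioo 0 π) (hφ : φ ∈ Ioo 0 π) (hne : θ ≠ φ) (t : ℝ) :
    Integrable (fun w => F t (qfun θ φ w.1 w.2)) (PiProd α β) := by
  have := isFiniteMeasure_PiProd hα hβ
  have hcont := hF.continuousOn_comp_qfun hθ hφ hne
  exact integrable_of_continuousOn_univ_prod (F := fun t (w : ℝ × ℝ) => F t (qfun θ φ w.1 w.2))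
    hcont isCompact_symmSquare (ae_PiProd_mem_symmSquare hα hβ) t

lemma Hker_eq_integral (hα : -(1 / 2) ≤ α) (hβ : -(1 / 2) ≤ β)
    (hθ : θ ∈ Ioo 0 π) (hφ : φ ∈ Ioo 0 π) (hne : θ ≠ φ) (t : ℝ) :
    Hker α β t θ φ =
      poissonConst α β * ∫ w, Psi α β t (qfun θ φ w.1 w.2) ∂PiProd α β := by
  have := isFiniteMeasure_PiMeasure hα
  have := isFiniteMeasure_PiMeasure hβ
  rw [PiProd, integral_prod _ ((isPsiSymbol_Psi α β).integrable_comp_qfun hα hβ hθ hφ hne t),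
    Hker, poissonConst, mul_assoc]
  simp only [Psi, div_eq_mul_inv (sinh _), integral_const_mul, one_div]

lemma iteratedDeriv_Hker (hα : -(1 / 2) ≤ α) (hβ : -(1 / 2) ≤ β)
    (hθ : θ ∈ Ioo 0 π) (hφ : φ ∈ Ioo 0 π) (hne : θ ≠ φ) (m : ℕ) :
    iteratedDeriv m (fun t => Hker α β t θ φ) = fun t =>
      poissonConst α β * ∫ w, psiTimeDeriv α β m t (qfun θ φ w.1 w.2) ∂PiProd α β := by
  have := isFiniteMeasure_PiProd hα hβ
  have hcont (m : ℕ) := (isPsiSymbol_psiTimeDeriv α β m).continuousOn_comp_qfun hθ hφ hne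
  have hderiv := iteratedDeriv_integral_of_continuousOn
    (F := fun t (w : ℝ × ℝ) => Psi α β t (qfun θ φ w.1 w.2))
    (fun w hw => contDiff_Psi (qfun_pos hθ hφ hne hw.1.2 hw.2.2)) hcont
    isCompact_symmSquare (ae_PiProd_mem_symmSquare hα hβ) m
  simp only [Hker_eq_integral hα hβ hθ hφ hne, psiTimeDeriv]
  funext t
  rw [iteratedDeriv_const_mul_field, hderiv]

lemma continuous_iteratedDeriv_Hker (hα : -(1 / 2) ≤ α) (hβ : -(1 / 2) ≤ β)
    (hθ : θ ∈ Ioo 0 π) (hφ : φ ∈ Ioo 0 π) (hne : θ ≠ φ) (m : ℕ) :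
    Continuous (iteratedDeriv m fun t => Hker α β t θ φ) := by
  have := isFiniteMeasure_PiProd hα hβ
  have hcont := (isPsiSymbol_psiTimeDeriv α β m).continuousOn_comp_qfun hθ hφ hne
  rw [iteratedDeriv_Hker hα hβ hθ hφ hne]
  exact continuous_const.mul <| continuous_integral_of_continuousOn
    (F := fun t (w : ℝ × ℝ) => psiTimeDeriv α β m t (qfun θ φ w.1 w.2)) hcont
    isCompact_symmSquare (ae_PiProd_mem_symmSquare hα hβ)

lemma enorm_iteratedDeriv_Hker_sub_le (hα : -(1 / 2) ≤ α) (hβ : -(1 / 2) ≤ β)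
    (hθ : θ ∈ Ioo 0 π) (hφ : φ ∈ Ioo 0 π) (hne : θ ≠ φ)
    (hx : x ∈ Ioo 0 π) (hxne : x ≠ φ) (m : ℕ) (t : ℝ) :
    ‖iteratedDeriv m (fun t => Hker α β t x φ) t
        - iteratedDeriv m (fun t => Hker α β t θ φ) t‖ₑ ≤
      ‖poissonConst α β‖ₑ * ∫⁻ w, ‖psiTimeDeriv α β m t (qfun x φ w.1 w.2)
        - psiTimeDeriv α β m t (qfun θ φ w.1 w.2)‖ₑ ∂PiProd α β := by
  have hint {y : ℝ} (hy : y ∈ Ioo 0 π) (hyne : y ≠ φ) :=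
    (isPsiSymbol_psiTimeDeriv α β m).integrable_comp_qfun hα hβ hy hφ hyne t
  rw [iteratedDeriv_Hker hα hβ hx hφ hxne, iteratedDeriv_Hker hα hβ hθ hφ hne, ← mul_sub, enorm_mul]
  gcongr
  exact enorm_integral_sub_integral_le (hint hx hxne).aestronglyMeasurable
    (hint hθ hne).aestronglyMeasurable

lemma exists_enorm_iteratedDeriv_Hker_mul_pow_sub_le (hα : -(1 / 2) ≤ α) (hβ : -(1 / 2) ≤ β)
    (hk₀ : 1 ≤ k₀) (hk : k ≤ k₀) :
    ∃ C, 0 < C ∧ ∀ θ ∈ Ioo 0 π, ∀ φ ∈ Ioo 0 π, θ ≠ φ → ∀ x ∈ Ioo 0 π, x ≠ φ →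
      |x - θ| ≤ qfun θ φ 1 1 / 2 → ∀ t, 0 < t →
      ‖iteratedDeriv (2 * k) (fun t => Hker α β t x φ) t * t ^ (2 * k₀ - 1)
          - iteratedDeriv (2 * k) (fun t => Hker α β t θ φ) t * t ^ (2 * k₀ - 1)‖ₑ ≤
        ENNReal.ofReal C * ‖x - θ‖ₑ * ∫⁻ w, ENNReal.ofReal
          (t * (t ^ 2 + qfun θ φ w.1 w.2 / 2) ^ (-(α + β + 2) - 1)) ∂PiProd α β := by
  obtain ⟨C, hC, hle⟩ :=
    exists_abs_psiTimeDeriv_qfun_sub_le (α := α) (β := β) (by linarith) hk₀ hk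
  refine ⟨(|poissonConst α β| + 1) * C, by positivity, fun θ hθ φ hφ hne x hx hxne hxθ t ht => ?_⟩
  have hpt : ∀ w ∈ symmSquare, ‖psiTimeDeriv α β (2 * k) t (qfun x φ w.1 w.2)
      - psiTimeDeriv α β (2 * k) t (qfun θ φ w.1 w.2)‖ₑ * ‖t ^ (2 * k₀ - 1)‖ₑ ≤
      ENNReal.ofReal C * ‖x - θ‖ₑ * ENNReal.ofReal
        (t * (t ^ 2 + qfun θ φ w.1 w.2 / 2) ^ (-(α + β + 2) - 1)) := by
    intro w hw
    have hq_le : qfun θ φ 1 1 ≤ qfun θ φ w.1 w.2 := qfun_one_one_le hθ hφ hw.1.2 hw.2.2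
    rw [← enorm_mul, enorm_eq_ofReal_abs, enorm_eq_ofReal_abs, ← ENNReal.ofReal_mul hC.le,
      ← ENNReal.ofReal_mul (by positivity), abs_mul, abs_of_pos (pow_pos ht _)]
    refine ENNReal.ofReal_le_ofReal
      ((hle θ φ x t w hw ht (qfun_pos hθ hφ hne hw.1.2 hw.2.2) (by linarith)).trans_eq (by ring))
  calc _ ≤ ‖poissonConst α β‖ₑ * (∫⁻ w, ‖psiTimeDeriv α β (2 * k) t (qfun x φ w.1 w.2)
          - psiTimeDeriv α β (2 * k) t (qfun θ φ w.1 w.2)‖ₑ ∂PiProd α β)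
          * ‖t ^ (2 * k₀ - 1)‖ₑ := by
        rw [← sub_mul, enorm_mul]
        gcongr
        exact enorm_iteratedDeriv_Hker_sub_le hα hβ hθ hφ hne hx hxne (2 * k) t
    _ ≤ ‖poissonConst α β‖ₑ * (ENNReal.ofReal C * ‖x - θ‖ₑ * ∫⁻ w, ENNReal.ofReal
          (t * (t ^ 2 + qfun θ φ w.1 w.2 / 2) ^ (-(α + β + 2) - 1)) ∂PiProd α β) := by
        rw [mul_assoc, ← lintegral_mul_const' _ _ enorm_ne_top, ← lintegral_const_mul' _ _
          (ENNReal.mul_ne_top ENNReal.ofReal_ne_top enorm_ne_top)]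
        exact mul_le_mul_right
          (lintegral_mono_ae ((ae_PiProd_mem_symmSquare hα hβ).mono hpt)) _
    _ ≤ _ := by
        rw [← mul_assoc, ← mul_assoc, ENNReal.ofReal_mul (by positivity), enorm_eq_ofReal_abs]
        gcongr
        linarith

lemma lintegral_lintegral_mul_qfun_rpow (hα : -(1 / 2) ≤ α) (hβ : -(1 / 2) ≤ β)
    (hθ : θ ∈ Ioo 0 π) (hφ : φ ∈ Ioo 0 π) (hne : θ ≠ φ) :
    ∫⁻ t in Ioi (0 : ℝ), ∫⁻ w, ENNReal.ofReal
        (t * (t ^ 2 + qfun θ φ w.1 w.2 / 2) ^ (-(α + β + 2) - 1)) ∂PiProd α β =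
      ENNReal.ofReal (2 ^ (α + β + 2) / (2 * (α + β + 2))) *
        ∫⁻ w, ENNReal.ofReal (qfun θ φ w.1 w.2 ^ (-(α + β + 2))) ∂PiProd α β := by
  have := isFiniteMeasure_PiProd hα hβ
  have hσ : 0 < α + β + 2 := by linarith
  have hq := (continuous_qfun (θ := θ) (φ := φ)).measurable
  rw [lintegral_lintegral_swap (by fun_prop), ← lintegral_const_mul' _ _ ENNReal.ofReal_ne_top]
  refine lintegral_congr_ae ((ae_PiProd_mem_symmSquare hα hβ).mono fun w hw => ?_)
  have hqw := qfun_pos hθ hφ hne hw.1.2 hw.2.2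
  dsimp only
  rw [lintegral_Ioi_mul_rpow hσ (half_pos hqw), ← ENNReal.ofReal_mul (by positivity),
    div_rpow hqw.le two_pos.le, rpow_neg two_pos.le]
  congr 1
  field_simp

lemma exists_enorm_deriv_Sk_le (hα : -(1 / 2) ≤ α) (hβ : -(1 / 2) ≤ β)
    (hk₀ : 1 ≤ k₀) (hk : k ≤ k₀) :
    ∃ C, 0 < C ∧ ∀ θ ∈ Ioo 0 π, ∀ φ ∈ Ioo 0 π, θ ≠ φ →
      ‖deriv (fun x => Sk α β k₀ k x φ) θ‖ₑ ≤
        ENNReal.ofReal C * ∫⁻ w, ENNReal.ofReal (qfun θ φ w.1 w.2 ^ (-(α + β + 2)))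
          ∂PiProd α β := by
  obtain ⟨C, hC, hle⟩ := exists_enorm_iteratedDeriv_Hker_mul_pow_sub_le hα hβ hk₀ hk
  have hσ : 0 < α + β + 2 := by linarith
  refine ⟨C * (2 ^ (α + β + 2) / (2 * (α + β + 2))), by positivity, fun θ hθ φ hφ hne =>
    enorm_deriv_le_of_eventually_enorm_sub_le ?_⟩
  have hmeas {y : ℝ} (hy : y ∈ Ioo 0 π) (hyne : y ≠ φ) : AEStronglyMeasurable
      (fun t => iteratedDeriv (2 * k) (fun t => Hker α β t y φ) t * t ^ (2 * k₀ - 1))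
      (volume.restrict (Ioi 0)) :=
    ((continuous_iteratedDeriv_Hker hα hβ hy hφ hyne (2 * k)).mul
      (continuous_pow _)).aestronglyMeasurable
  have hq := qfun_one_one_pos hθ hφ hne
  filter_upwards [isOpen_Ioo.mem_nhds hθ, isOpen_ne.mem_nhds hne,
    Metric.closedBall_mem_nhds θ (half_pos hq)] with x hx hxne hxθ
  calc ‖Sk α β k₀ k x φ - Sk α β k₀ k θ φ‖ₑ
      ≤ ∫⁻ t in Ioi (0 : ℝ),
          ‖iteratedDeriv (2 * k) (fun t => Hker α β t x φ) t * t ^ (2 * k₀ - 1)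
            - iteratedDeriv (2 * k) (fun t => Hker α β t θ φ) t * t ^ (2 * k₀ - 1)‖ₑ :=
        enorm_integral_sub_integral_le (hmeas hx hxne) (hmeas hθ hne)
    _ ≤ ∫⁻ t in Ioi (0 : ℝ), ENNReal.ofReal C * ‖x - θ‖ₑ * ∫⁻ w, ENNReal.ofReal
          (t * (t ^ 2 + qfun θ φ w.1 w.2 / 2) ^ (-(α + β + 2) - 1)) ∂PiProd α β :=
        setLIntegral_mono' measurableSet_Ioi (hle θ hθ φ hφ hne x hx hxne hxθ)
    _ = _ := by
        rw [lintegral_const_mul' _ _ (ENNReal.mul_ne_top ENNReal.ofReal_ne_top enorm_ne_top),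
          lintegral_lintegral_mul_qfun_rpow hα hβ hθ hφ hne, ENNReal.ofReal_mul hC.le]
        ring

lemma Sk_comm (α β : ℝ) (k₀ k : ℕ) (θ φ : ℝ) : Sk α β k₀ k θ φ = Sk α β k₀ k φ θ := by
  simp only [Sk, Hker, qfun_comm θ φ]

end Kernel

/-- gradient estimate for the kernels `S_k^{α,β}`. -/
theorem Sk_gradient (α β : ℝ) (hα : -(1 / 2) ≤ α) (hβ : -(1 / 2) ≤ β)
    (k₀ k : ℕ) (hk₀ : 1 ≤ k₀) (hk : k ≤ k₀) (hcrit : α + β = -1 → 1 ≤ k) :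
    ∃ C : ℝ, 0 < C ∧
      ∀ θ ∈ Ioo (0 : ℝ) π, ∀ φ ∈ Ioo (0 : ℝ) π, θ ≠ φ →
        |deriv (fun θ' => ∫ t in Ioi (0 : ℝ),
            iteratedDeriv (2 * k) (fun t' => Hker α β t' θ' φ) t * t ^ (2 * k₀ - 1)) θ| +
        |deriv (fun φ' => ∫ t in Ioi (0 : ℝ),
            iteratedDeriv (2 * k) (fun t' => Hker α β t' θ φ') t * t ^ (2 * k₀ - 1)) φ|
          ≤ C / (|θ - φ| * (jacobiMeasure α β (jacobiBall θ |θ - φ|)).toReal) := by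
  obtain ⟨C, hC, hderiv⟩ := exists_enorm_deriv_Sk_le hα hβ hk₀ hk
  obtain ⟨K, hK, hint⟩ := exists_lintegral_qfun_rpow_le hα hβ
  refine ⟨2 * (C * K), by positivity, fun θ hθ φ hφ hne => ?_⟩
  set D := |θ - φ| * (jacobiMeasure α β (jacobiBall θ |θ - φ|)).toReal
  have hle {d : ℝ} (hd : ‖d‖ₑ ≤ ENNReal.ofReal C *
      ∫⁻ w, ENNReal.ofReal (qfun θ φ w.1 w.2 ^ (-(α + β + 2))) ∂PiProd α β) :
      |d| ≤ C * (K / D) := by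
    rw [← ENNReal.ofReal_le_ofReal_iff (by positivity), ← enorm_eq_ofReal_abs,
      ENNReal.ofReal_mul hC.le]
    exact hd.trans (by gcongr; exact hint θ hθ φ hφ hne)
  have hleft := hle (hderiv θ hθ φ hφ hne)
  have hright : |deriv (fun y => Sk α β k₀ k θ y) φ| ≤ C * (K / D) := by
    simp only [Sk_comm α β k₀ k θ]
    simp only [qfun_comm θ φ] at hle
    exact hle (hderiv φ hφ θ hθ hne.symm)
  calc _ ≤ C * (K / D) + C * (K / D) := add_le_add hleft hright
    _ = 2 * (C * K) / D := by ring
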